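/- arXiv:2207.09972 — 7 statements merged into one kernel-verified Lean document; each statement's English description precedes it below -/
import Mathlib

section
/- For every n ≥ 2 and every p with 1 ≤ p ≤ n, the subgraph of the associahedron graph K_n induced by the oriented class Θ_{T_p} is isomorphic to the Cartesian product K_{p−1} □ K_{n−p} of two smaller associahedron graphs; in particular each oriented class induces a product K_l □ K_r with l + r = n − 1. -/
open Finset

/-- `x` lies strictly between `a` and `b` in cyclic (counterclockwise) order
on the vertices `0, 1, …, m-1` of a convex `m`-gon. -/
def CycBtw {m : ℕ} (a b x : Fin m) : Prop :=
  0 < (x - a).val ∧ (x - a).val < (b - a).val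

/-- `a` and `b` are adjacent (cyclically consecutive) vertices of the convex `m`-gon. -/
def PolyAdj {m : ℕ} (a b : Fin m) : Prop :=
  (b - a).val = 1 ∨ (a - b).val = 1

/-- `e` is a side of the convex `m`-gon. -/
def IsSide {m : ℕ} (e : Sym2 (Fin m)) : Prop :=
  ∃ a b : Fin m, e = s(a, b) ∧ PolyAdj a b

/-- `e` is a diagonal of the convex `m`-gon: a pair of distinct non-adjacent vertices. -/
def IsDiagonal {m : ℕ} (e : Sym2 (Fin m)) : Prop :=
  ¬ e.IsDiag ∧ ∀ a b : Fin m, e = s(a, b) → ¬ PolyAdj a b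

/-- Two chords cross iff exactly one endpoint of one lies strictly between the
endpoints of the other (for every representation of the endpoints). -/
def Crosses {m : ℕ} (e f : Sym2 (Fin m)) : Prop :=
  ∀ a b : Fin m, e = s(a, b) →
    ∃ c d : Fin m, f = s(c, d) ∧ Xor' (CycBtw a b c) (CycBtw a b d)

/-- A triangulation of the convex `(n+2)`-gon: a maximal set of pairwise
non-crossing diagonals. -/
def IsTriangulation (n : ℕ) (t : Finset (Sym2 (Fin (n + 2)))) : Prop :=
  (∀ e ∈ t, IsDiagonal e) ∧
  (∀ e ∈ t, ∀ f ∈ t, ¬ Crosses e f) ∧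
  (∀ e, IsDiagonal e → (∀ f ∈ t, ¬ Crosses e f) → e ∈ t)

/-- The type of triangulations of the convex `(n+2)`-gon. -/
def Triangulation (n : ℕ) : Type :=
  {t : Finset (Sym2 (Fin (n + 2))) // IsTriangulation n t}

instance (n : ℕ) : DecidableEq (Triangulation n) := fun a b =>
  decidable_of_iff (a.val = b.val) Subtype.ext_iff.symm

noncomputable instance (n : ℕ) : Fintype (Triangulation n) := by
  classical exact Subtype.fintype _

/-- The associahedron graph `K_n`: vertices are the triangulations of the convex
`(n+2)`-gon, with an edge between two triangulations iff they differ in exactly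
one diagonal (a flip). -/
def assocGraph (n : ℕ) : SimpleGraph (Triangulation n) where
  Adj s t := (s.val \ t.val).card = 1 ∧ (t.val \ s.val).card = 1
  symm := ⟨fun s t h => ⟨h.2, h.1⟩⟩
  loopless := ⟨fun s h => by simp at h⟩

/-- The set of edges of `G` with exactly one endpoint in `S`. -/
def edgeBoundary {V : Type*} (G : SimpleGraph V) (S : Set V) : Set (Sym2 V) :=
  {e | e ∈ G.edgeSet ∧ ∃ u v : V, e = s(u, v) ∧ u ∈ S ∧ v ∉ S}

/-- `e` is an edge of the triangulation `t`: a side of the polygon or one of the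
diagonals of `t`. -/
def EdgeOfT {n : ℕ} (t : Triangulation n) (e : Sym2 (Fin (n + 2))) : Prop :=
  IsSide e ∨ e ∈ t.val

/-- The triangle with vertices `a`, `b`, `c` is one of the `n` triangles of the
triangulation `t` (for pairwise non-crossing sets of diagonals this holds exactly
when all three chords are edges of `t`). -/
def IsTriangleOf {n : ℕ} (t : Triangulation n) (a b c : Fin (n + 2)) : Prop :=
  a ≠ b ∧ b ≠ c ∧ a ≠ c ∧ EdgeOfT t s(a, b) ∧ EdgeOfT t s(b, c) ∧ EdgeOfT t s(a, c)

open Fin.NatCast in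
/-- The oriented class `Θ_{T_p}` (w.r.t. the special side `e* = {0, n+1}`): the set of
triangulations of the convex `(n+2)`-gon having the triangle `T_p = {0, p, n+1}` as one of
their triangles. -/
def orientedClass (n p : ℕ) : Set (Triangulation n) :=
  {t | IsTriangleOf t (0 : Fin (n + 2)) ((p : ℕ) : Fin (n + 2)) (((n + 1 : ℕ)) : Fin (n + 2))}

/-- The set `E_{p,q}` of edges of `K_n` with one endpoint in `Θ_{T_p}` and the other
in `Θ_{T_q}`. -/
def edgesBetween (n p q : ℕ) : Set (Sym2 (Triangulation n)) :=
  {e | e ∈ (assocGraph n).edgeSet ∧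
    ∃ u v : Triangulation n, e = s(u, v) ∧ u ∈ orientedClass n p ∧ v ∈ orientedClass n q}

/-- The boundary set `∂_{p,q}`: triangulations in `Θ_{T_p}` having a neighbor in
`Θ_{T_q}`. -/
def boundarySet (n p q : ℕ) : Set (Triangulation n) :=
  {t | t ∈ orientedClass n p ∧
    ∃ t' : Triangulation n, t' ∈ orientedClass n q ∧ (assocGraph n).Adj t t'}

theorem sub_val_cases {m : ℕ} (a b : Fin m) :
    (b ≤ a ∧ (a - b).val = a.val - b.val) ∨ (a < b ∧ (a - b).val = m + a.val - b.val) := by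
  rcases le_or_gt b a with h | h
  · exact Or.inl ⟨h, Fin.sub_val_of_le h⟩
  · exact Or.inr ⟨h, Fin.coe_sub_iff_lt.2 h⟩

theorem polyAdj_iff {n : ℕ} {a b : Fin (n + 2)} (h : a < b) :
    PolyAdj a b ↔ (a.val + 1 = b.val ∨ (a.val = 0 ∧ b.val = n + 1)) := by
  unfold PolyAdj
  have ha := a.2
  have hb := b.2
  have h1 := sub_val_cases a b
  have h2 := sub_val_cases b a
  simp only [Fin.lt_def, Fin.le_def] at *
  omega

theorem polyAdj_comm {n : ℕ} {a b : Fin (n + 2)} : PolyAdj a b ↔ PolyAdj b a := by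
  unfold PolyAdj; tauto

theorem diag_iff {n : ℕ} {a b : Fin (n + 2)} (h : a < b) :
    IsDiagonal s(a, b) ↔ (a.val + 1 < b.val ∧ ¬ (a.val = 0 ∧ b.val = n + 1)) := by
  have key : IsDiagonal s(a, b) ↔ ¬ PolyAdj a b := by
    constructor
    · intro hd
      exact hd.2 a b rfl
    · intro hd
      refine ⟨by simpa using h.ne, ?_⟩
      intro c d hcd
      rcases Sym2.eq_iff.1 hcd with ⟨rfl, rfl⟩ | ⟨rfl, rfl⟩
      · exact hd
      · rwa [polyAdj_comm]
  rw [key, polyAdj_iff h]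
  simp only [Fin.lt_def] at h
  omega

theorem side_iff {n : ℕ} {a b : Fin (n + 2)} (h : a < b) :
    IsSide s(a, b) ↔ (a.val + 1 = b.val ∨ (a.val = 0 ∧ b.val = n + 1)) := by
  rw [← polyAdj_iff h]
  constructor
  · rintro ⟨c, d, hcd, hp⟩
    rcases Sym2.eq_iff.1 hcd with ⟨rfl, rfl⟩ | ⟨rfl, rfl⟩
    · exact hp
    · rwa [polyAdj_comm]
  · intro hp
    exact ⟨a, b, rfl, hp⟩

theorem cycBtw_iff {n : ℕ} {a b x : Fin (n + 2)} (h : a < b) :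
    CycBtw a b x ↔ a.val < x.val ∧ x.val < b.val := by
  unfold CycBtw
  have ha := a.2
  have hb := b.2
  have hx := x.2
  have h1 := sub_val_cases x a
  have h2 := sub_val_cases b a
  simp only [Fin.lt_def, Fin.le_def] at *
  omega

theorem cycBtw_iff' {n : ℕ} {a b x : Fin (n + 2)} (h : a < b) :
    CycBtw b a x ↔ b.val < x.val ∨ x.val < a.val := by
  unfold CycBtw
  have ha := a.2
  have hb := b.2
  have hx := x.2
  have h1 := sub_val_cases x b
  have h2 := sub_val_cases a b
  simp only [Fin.lt_def, Fin.le_def] at *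
  omega

theorem exists_rep {n : ℕ} {c d : Fin (n + 2)} (P : Fin (n + 2) → Prop) :
    (∃ x y, s(c, d) = s(x, y) ∧ Xor' (P x) (P y)) ↔ Xor' (P c) (P d) := by
  constructor
  · rintro ⟨x, y, hxy, hp⟩
    rcases Sym2.eq_iff.1 hxy with ⟨rfl, rfl⟩ | ⟨rfl, rfl⟩
    · exact hp
    · change Xor (P c) (P d)
      rw [xor_comm]
      exact hp
  · intro hp
    exact ⟨c, d, rfl, hp⟩

theorem cross_iff {n : ℕ} {a b c d : Fin (n + 2)} (h : a < b) (h' : c < d) :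
    Crosses s(a, b) s(c, d) ↔
      ((a.val < c.val ∧ c.val < b.val ∧ b.val < d.val) ∨
       (c.val < a.val ∧ a.val < d.val ∧ d.val < b.val)) := by
  have key : Crosses s(a, b) s(c, d) ↔ Xor' (CycBtw a b c) (CycBtw a b d) ∧
      Xor' (CycBtw b a c) (CycBtw b a d) := by
    unfold Crosses
    simp only [exists_rep]
    constructor
    · intro hh
      exact ⟨hh a b rfl, hh b a Sym2.eq_swap⟩
    · rintro ⟨h1, h2⟩ x y hxy
      rcases Sym2.eq_iff.1 hxy with ⟨rfl, rfl⟩ | ⟨rfl, rfl⟩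
      · exact h1
      · exact h2
  rw [key, cycBtw_iff h, cycBtw_iff h, cycBtw_iff' h, cycBtw_iff' h]
  simp only [Fin.lt_def, Xor', Xor] at *
  omega

theorem exists_lt {n : ℕ} {e : Sym2 (Fin (n + 2))} (h : ¬ e.IsDiag) :
    ∃ a b, a < b ∧ e = s(a, b) := by
  induction e with
  | _ a b =>
    have hab : a ≠ b := by simpa using h
    rcases lt_or_gt_of_ne hab with h1 | h1
    · exact ⟨a, b, h1, rfl⟩
    · exact ⟨b, a, h1, Sym2.eq_swap⟩

/-- Shift embedding of a smaller polygon. -/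
def sh {m n : ℕ} (k : ℕ) (h : k + m ≤ n) (i : Fin (m + 2)) : Fin (n + 2) :=
  ⟨i.val + k, by have := i.2; omega⟩

theorem sh_val {m n : ℕ} (k : ℕ) (h : k + m ≤ n) (i : Fin (m + 2)) :
    (sh k h i).val = i.val + k := rfl

theorem sh_inj {m n : ℕ} (k : ℕ) (h : k + m ≤ n) :
    Function.Injective (sh (m := m) (n := n) k h) := by
  intro i j hij
  have := congrArg Fin.val hij
  simp only [sh_val] at this
  ext; omega

theorem sh_lt {m n : ℕ} (k : ℕ) (h : k + m ≤ n) {i j : Fin (m + 2)} (hij : i < j) :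
    sh (n := n) k h i < sh k h j := by
  simp only [Fin.lt_def, sh_val] at *
  omega

theorem exists_sh {m n : ℕ} (k : ℕ) (h : k + m ≤ n) {a b : Fin (n + 2)} (hab : a < b)
    (ha : k ≤ a.val) (hb : b.val ≤ k + m + 1) :
    ∃ i j : Fin (m + 2), i < j ∧ a = sh k h i ∧ b = sh k h j := by
  simp only [Fin.lt_def] at hab
  refine ⟨⟨a.val - k, by omega⟩, ⟨b.val - k, by omega⟩, ?_, ?_, ?_⟩
  · simp only [Fin.lt_def]; omega
  · ext; simp only [sh_val]; omega
  · ext; simp only [sh_val]; omega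

/-- Restriction of a set of diagonals to a sub-polygon. -/
noncomputable def restr {m n : ℕ} (k : ℕ) (h : k + m ≤ n) (t : Finset (Sym2 (Fin (n + 2)))) :
    Finset (Sym2 (Fin (m + 2))) := by
  classical
  exact Finset.univ.filter fun e => IsDiagonal e ∧ Sym2.map (sh k h) e ∈ t

theorem mem_restr {m n : ℕ} (k : ℕ) (h : k + m ≤ n) (t : Finset (Sym2 (Fin (n + 2))))
    (e : Sym2 (Fin (m + 2))) :
    e ∈ restr k h t ↔ IsDiagonal e ∧ Sym2.map (sh k h) e ∈ t := by
  simp [restr]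

theorem cross_map {m n : ℕ} (k : ℕ) (h : k + m ≤ n) {e f : Sym2 (Fin (m + 2))}
    (he : ¬ e.IsDiag) (hf : ¬ f.IsDiag) :
    Crosses (Sym2.map (sh (n := n) k h) e) (Sym2.map (sh k h) f) ↔ Crosses e f := by
  obtain ⟨a, b, hab, rfl⟩ := exists_lt he
  obtain ⟨c, d, hcd, rfl⟩ := exists_lt hf
  rw [Sym2.map_mk, Sym2.map_mk, cross_iff (sh_lt k h hab) (sh_lt k h hcd), cross_iff hab hcd]
  simp only [sh_val]
  omega

theorem diag_map {m n : ℕ} (k : ℕ) (h : k + m ≤ n) {e : Sym2 (Fin (m + 2))}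
    (he : IsDiagonal e) : IsDiagonal (Sym2.map (sh (n := n) k h) e) := by
  obtain ⟨a, b, hab, rfl⟩ := exists_lt he.1
  rw [Sym2.map_mk, diag_iff (sh_lt k h hab)]
  rw [diag_iff hab] at he
  have := b.2
  simp only [sh_val]
  omega

theorem restr_isTri {m n : ℕ} (k : ℕ) (h : k + m ≤ n) {t : Finset (Sym2 (Fin (n + 2)))}
    (ht : IsTriangulation n t)
    (hb : ∀ c d : Fin (n + 2), c < d → s(c, d) ∈ t →
      ¬ ((k < c.val ∧ c.val < k + m + 1 ∧ k + m + 1 < d.val) ∨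
       (c.val < k ∧ k < d.val ∧ d.val < k + m + 1))) :
    IsTriangulation m (restr k h t) := by
  obtain ⟨h1, h2, h3⟩ := ht
  refine ⟨?_, ?_, ?_⟩
  · intro e he
    exact ((mem_restr _ _ _ _).1 he).1
  · intro e he f hf
    rw [mem_restr] at he hf
    rw [← cross_map (n := n) k h he.1.1 hf.1.1]
    exact h2 _ he.2 _ hf.2
  · intro e he hc
    rw [mem_restr]
    refine ⟨he, h3 _ (diag_map k h he) ?_⟩
    intro g hg hcr
    obtain ⟨c, d, hcd, rfl⟩ := exists_lt (h1 g hg).1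
    have hbb := hb c d hcd hg
    have he' := he
    obtain ⟨a, b, hab, rfl⟩ := exists_lt he.1
    have hcr' := hcr
    rw [Sym2.map_mk, cross_iff (sh_lt k h hab) hcd] at hcr'
    simp only [sh_val] at hcr'
    have hb2 := b.2
    obtain ⟨i, j, hij, rfl, rfl⟩ := exists_sh k h hcd (by omega) (by omega)
    have hnd : ¬ (s(i, j) : Sym2 (Fin (m + 2))).IsDiag := by simpa using hij.ne
    have hcr2 : Crosses s(a, b) s(i, j) := by
      rw [← cross_map (n := n) k h he.1 hnd]; exact hcr
    refine hc s(i, j) ?_ hcr2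
    rw [mem_restr]
    refine ⟨?_, hg⟩
    rw [cross_iff hab hij] at hcr2
    rw [diag_iff hij]
    omega

theorem tri_eq_of_subset {n : ℕ} {s t : Finset (Sym2 (Fin (n + 2)))} (hs : IsTriangulation n s)
    (ht : IsTriangulation n t) (h : s ⊆ t) : s = t := by
  refine Finset.Subset.antisymm h fun e he => ?_
  exact hs.2.2 e (ht.1 e he) fun f hf => ht.2.1 e he f (h hf)

/-- The vertex `p`. -/
def vp (n p : ℕ) (h : p ≤ n) : Fin (n + 2) := ⟨p, by omega⟩

theorem vp_val (n p : ℕ) (h : p ≤ n) : (vp n p h).val = p := rfl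

theorem class_iff {n p : ℕ} (hp : 1 ≤ p) (hpn : p ≤ n) (t : Triangulation n) :
    t ∈ orientedClass n p ↔
      EdgeOfT t s(0, vp n p hpn) ∧ EdgeOfT t s(vp n p hpn, Fin.last (n + 1)) := by
  have e1 : (open Fin.NatCast in ((p : ℕ) : Fin (n + 2))) = vp n p hpn := by
    ext; simp [vp, Fin.val_natCast]; omega
  have e2 : (open Fin.NatCast in (((n + 1 : ℕ)) : Fin (n + 2))) = Fin.last (n + 1) := by
    ext; simp [Fin.val_natCast]
  unfold orientedClass IsTriangleOf
  simp only [Set.mem_setOf_eq]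
  rw [e1, e2]
  constructor
  · rintro ⟨-, -, -, h1, h2, -⟩
    exact ⟨h1, h2⟩
  · rintro ⟨h1, h2⟩
    refine ⟨?_, ?_, ?_, h1, h2, Or.inl ?_⟩
    · intro h; have := congrArg Fin.val h; simp only [vp_val, Fin.val_zero, Fin.val_last] at this; omega
    · intro h; have := congrArg Fin.val h; simp only [vp_val, Fin.val_zero, Fin.val_last] at this; omega
    · intro h; have := congrArg Fin.val h; simp at this
    · rw [side_iff (by simp [Fin.lt_def])]
      right; simp

section
variable {n p l r : ℕ}

theorem v0_lt (hp : 1 ≤ p) (hpn : p ≤ n) : (0 : Fin (n + 2)) < vp n p hpn := by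
  simp [Fin.lt_def, vp]; omega

theorem vl_lt (hpn : p ≤ n) : vp n p hpn < Fin.last (n + 1) := by
  simp [Fin.lt_def, vp]; omega

/-- No chord of a triangulation in the class separates the vertex `p`. -/
theorem class_sep (hp : 1 ≤ p) (hpn : p ≤ n) {t : Triangulation n}
    (h : t ∈ orientedClass n p) {c d : Fin (n + 2)} (hcd : c < d) (hm : s(c, d) ∈ t.val) :
    d.val ≤ p ∨ p ≤ c.val := by
  obtain ⟨h1, h2⟩ := (class_iff hp hpn t).1 h
  have hd := (diag_iff hcd).1 (t.2.1 _ hm)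
  have hl := vl_lt (n := n) hpn
  have h0 := v0_lt (n := n) hp hpn
  have k1 : ¬ (0 < c.val ∧ c.val < p ∧ p < d.val) := by
    rcases h1 with h1 | h1
    · rw [side_iff h0] at h1
      simp only [vp_val, Fin.val_zero, Fin.val_last] at h1; omega
    · have := t.2.2.1 _ h1 _ hm
      rw [cross_iff h0 hcd] at this
      simp only [vp_val, Fin.val_zero, Fin.val_last] at this; omega
  have k2 : ¬ (c.val < p ∧ p < d.val ∧ d.val < n + 1) := by
    rcases h2 with h2 | h2
    · rw [side_iff hl] at h2
      simp only [vp_val, Fin.val_zero, Fin.val_last] at h2; omega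
    · have := t.2.2.1 _ h2 _ hm
      rw [cross_iff hl hcd] at this
      simp only [vp_val, Fin.val_zero, Fin.val_last] at this; omega
  have := d.2
  omega

open Classical in
/-- Gluing of triangulations. -/
noncomputable def glue (hl : 0 + l ≤ n) (hr : p + r ≤ n) (hpn : p ≤ n)
    (s : Finset (Sym2 (Fin (l + 2)))) (t : Finset (Sym2 (Fin (r + 2)))) :
    Finset (Sym2 (Fin (n + 2))) :=
  (s.image (Sym2.map (sh 0 hl)) ∪ t.image (Sym2.map (sh p hr))) ∪
    ({s(0, vp n p hpn), s(vp n p hpn, Fin.last (n + 1))} : Finset _).filter IsDiagonal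

/-- Numeric description of the chords of a glued set. -/
theorem mem_glue (hl : 0 + l ≤ n) (hr : p + r ≤ n) (hpn : p ≤ n)
    (s : Finset (Sym2 (Fin (l + 2)))) (t : Finset (Sym2 (Fin (r + 2)))) (e) :
    e ∈ glue hl hr hpn s t ↔ (∃ f ∈ s, Sym2.map (sh 0 hl) f = e) ∨
      (∃ f ∈ t, Sym2.map (sh p hr) f = e) ∨
      (IsDiagonal e ∧ (e = s(0, vp n p hpn) ∨ e = s(vp n p hpn, Fin.last (n + 1)))) := by
  simp only [glue, Finset.mem_union, Finset.mem_image, Finset.mem_filter, Finset.mem_insert,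
    Finset.mem_singleton]
  rw [or_assoc, and_comm]

theorem mem_glue_left (hlp : p = l + 1) (hl : 0 + l ≤ n) (hr : p + r ≤ n) (hpn : p ≤ n)
    {s : Finset (Sym2 (Fin (l + 2)))} {t : Finset (Sym2 (Fin (r + 2)))}
    (ht : ∀ e ∈ t, IsDiagonal e)
    {f : Sym2 (Fin (l + 2))} (hf : IsDiagonal f) :
    Sym2.map (sh 0 hl) f ∈ glue hl hr hpn s t ↔ f ∈ s := by
  rw [mem_glue]
  constructor
  · rintro (⟨g, hg, hgf⟩ | ⟨g, hg, hgf⟩ | ⟨-, hgf⟩)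
    · rwa [← Sym2.map.injective (sh_inj 0 hl) hgf]
    all_goals
      exfalso
      obtain ⟨a, b, hab, rfl⟩ := exists_lt hf.1
      rw [diag_iff hab] at hf
      have hb := b.2
    · have hg' := ht g hg
      obtain ⟨c, d, hcd, rfl⟩ := exists_lt hg'.1
      rw [Sym2.map_mk, Sym2.map_mk, Sym2.eq_iff] at hgf
      simp only [Fin.ext_iff, sh_val, Fin.lt_def] at *
      omega
    · simp only [Sym2.map_mk, Sym2.eq_iff, Fin.ext_iff, sh_val, Fin.lt_def, vp, Fin.val_zero,
        Fin.val_last] at *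
      omega
  · intro h
    exact Or.inl ⟨f, h, rfl⟩

theorem mem_glue_right (hlp : p = l + 1) (hn : n = p + r)
    (hl : 0 + l ≤ n) (hr : p + r ≤ n) (hpn : p ≤ n)
    {s : Finset (Sym2 (Fin (l + 2)))} {t : Finset (Sym2 (Fin (r + 2)))}
    (hs : ∀ e ∈ s, IsDiagonal e)
    {f : Sym2 (Fin (r + 2))} (hf : IsDiagonal f) :
    Sym2.map (sh p hr) f ∈ glue hl hr hpn s t ↔ f ∈ t := by
  rw [mem_glue]
  constructor
  · rintro (⟨g, hg, hgf⟩ | ⟨g, hg, hgf⟩ | ⟨-, hgf⟩)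
    on_goal 2 => rwa [← Sym2.map.injective (sh_inj p hr) hgf]
    all_goals
      exfalso
      obtain ⟨a, b, hab, rfl⟩ := exists_lt hf.1
      rw [diag_iff hab] at hf
      have hb := b.2
    · have hg' := hs g hg
      obtain ⟨c, d, hcd, rfl⟩ := exists_lt hg'.1
      have hd := d.2
      rw [Sym2.map_mk, Sym2.map_mk, Sym2.eq_iff] at hgf
      simp only [Fin.ext_iff, sh_val, Fin.lt_def] at *
      omega
    · simp only [Sym2.map_mk, Sym2.eq_iff, Fin.ext_iff, sh_val, Fin.lt_def, vp, Fin.val_zero,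
        Fin.val_last] at *
      omega
  · intro h
    exact Or.inr (Or.inl ⟨f, h, rfl⟩)

/-- Classification of diagonals on one side of the vertex `p`. -/
theorem diag_cases (hlp : p = l + 1) (hn : n = p + r)
    (hl : 0 + l ≤ n) (hr : p + r ≤ n) (hpn : p ≤ n) {c d : Fin (n + 2)} (hcd : c < d)
    (he : IsDiagonal s(c, d)) (hs : d.val ≤ p ∨ p ≤ c.val) :
    (∃ f, IsDiagonal f ∧ Sym2.map (sh 0 hl) f = s(c, d)) ∨
    (∃ f, IsDiagonal f ∧ Sym2.map (sh p hr) f = s(c, d)) ∨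
    (s(c, d) = s(0, vp n p hpn) ∨ s(c, d) = s(vp n p hpn, Fin.last (n + 1))) := by
  rw [diag_iff hcd] at he
  have hd2 := d.2
  rcases hs with hs | hs
  · by_cases hb : c.val = 0 ∧ d.val = p
    · right; right; left
      have : c = 0 := by ext; simpa using hb.1
      have : d = vp n p hpn := by ext; simpa [vp] using hb.2
      subst_vars; rfl
    · left
      obtain ⟨i, j, hij, rfl, rfl⟩ := exists_sh 0 hl hcd (by omega) (by omega)
      refine ⟨s(i, j), ?_, rfl⟩
      rw [diag_iff hij]
      simp only [sh_val] at *
      omega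
  · by_cases hb : c.val = p ∧ d.val = n + 1
    · right; right; right
      have h1 : c = vp n p hpn := by ext; simpa [vp] using hb.1
      have h2 : d = Fin.last (n + 1) := by ext; simpa using hb.2
      rw [h1, h2]
    · right; left
      obtain ⟨i, j, hij, rfl, rfl⟩ := exists_sh p hr hcd (by omega) (by omega)
      refine ⟨s(i, j), ?_, rfl⟩
      rw [diag_iff hij]
      simp only [sh_val] at *
      omega

/-- The chords of a glued set are diagonals lying on one side of `p`. -/
theorem glue_rep (hlp : p = l + 1) (hn : n = p + r)
    (hl : 0 + l ≤ n) (hr : p + r ≤ n) (hpn : p ≤ n)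
    {s : Finset (Sym2 (Fin (l + 2)))} {t : Finset (Sym2 (Fin (r + 2)))}
    (hs : ∀ e ∈ s, IsDiagonal e) (ht : ∀ e ∈ t, IsDiagonal e)
    {e : Sym2 (Fin (n + 2))} (he : e ∈ glue hl hr hpn s t) :
    IsDiagonal e ∧ ∃ c d, c < d ∧ e = s(c, d) ∧
      ((∃ i j, i < j ∧ s(i, j) ∈ s ∧ c = sh 0 hl i ∧ d = sh 0 hl j) ∨
       (∃ i j, i < j ∧ s(i, j) ∈ t ∧ c = sh p hr i ∧ d = sh p hr j) ∨
       (c.val = 0 ∧ d.val = p) ∨ (c.val = p ∧ d.val = n + 1)) := by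
  rw [mem_glue] at he
  rcases he with ⟨f, hf, rfl⟩ | ⟨f, hf, rfl⟩ | ⟨hd, hf⟩
  · refine ⟨diag_map 0 hl (hs f hf), ?_⟩
    obtain ⟨i, j, hij, rfl⟩ := exists_lt (hs f hf).1
    exact ⟨_, _, sh_lt 0 hl hij, rfl, Or.inl ⟨i, j, hij, hf, rfl, rfl⟩⟩
  · refine ⟨diag_map p hr (ht f hf), ?_⟩
    obtain ⟨i, j, hij, rfl⟩ := exists_lt (ht f hf).1
    exact ⟨_, _, sh_lt p hr hij, rfl, Or.inr (Or.inl ⟨i, j, hij, hf, rfl, rfl⟩)⟩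
  · refine ⟨hd, ?_⟩
    rcases hf with hf | hf
    · exact ⟨_, _, v0_lt (by omega) hpn, hf, by simp [vp]⟩
    · exact ⟨_, _, vl_lt hpn, hf, by simp [vp]⟩

theorem glue_isTri (hlp : p = l + 1) (hn : n = p + r)
    (hl : 0 + l ≤ n) (hr : p + r ≤ n) (hpn : p ≤ n)
    {s : Finset (Sym2 (Fin (l + 2)))} {t : Finset (Sym2 (Fin (r + 2)))}
    (hs : IsTriangulation l s) (ht : IsTriangulation r t) :
    IsTriangulation n (glue hl hr hpn s t) := by
  refine ⟨fun e he => (glue_rep hlp hn hl hr hpn hs.1 ht.1 he).1, ?_, ?_⟩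
  · intro e he f hf
    obtain ⟨hde, a, b, hab, rfl, h1⟩ := glue_rep hlp hn hl hr hpn hs.1 ht.1 he
    obtain ⟨hdf, c, d, hcd, rfl, h2⟩ := glue_rep hlp hn hl hr hpn hs.1 ht.1 hf
    have hb2 := b.2
    have hd2 := d.2
    rw [cross_iff hab hcd]
    rcases h1 with ⟨i, j, hij, hm, rfl, rfl⟩ | ⟨i, j, hij, hm, rfl, rfl⟩ | h1 <;>
    rcases h2 with ⟨x, y, hxy, hm', rfl, rfl⟩ | ⟨x, y, hxy, hm', rfl, rfl⟩ | h2
    · have := hs.2.1 _ hm _ hm'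
      rw [cross_iff hij hxy] at this
      simp only [sh_val]; omega
    · have := j.2
      simp only [sh_val]; omega
    · have := j.2
      simp only [sh_val]; omega
    · have := y.2
      simp only [sh_val]; omega
    · have := ht.2.1 _ hm _ hm'
      rw [cross_iff hij hxy] at this
      simp only [sh_val]; omega
    · have := j.2
      simp only [sh_val]; omega
    · have := y.2
      simp only [sh_val]; omega
    · have := y.2
      simp only [sh_val]; omega
    · omega
  · intro e he hc
    obtain ⟨a, b, hab, rfl⟩ := exists_lt he.1
    have hd := (diag_iff hab).1 he
    have hb2 := b.2
    have h0 := v0_lt (n := n) (p := p) (by omega) hpn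
    have hL := vl_lt (n := n) hpn
    have k1 : ¬ (0 < a.val ∧ a.val < p ∧ p < b.val) := by
      by_cases hD : IsDiagonal s(0, vp n p hpn)
      · have := hc s(0, vp n p hpn) ((mem_glue ..).2 (Or.inr (Or.inr ⟨hD, Or.inl rfl⟩)))
        rw [cross_iff hab h0] at this
        simp only [vp_val, Fin.val_zero, Fin.val_last] at this; omega
      · rw [diag_iff h0] at hD
        simp only [vp_val, Fin.val_zero, Fin.val_last] at hD; omega
    have k2 : ¬ (a.val < p ∧ p < b.val ∧ b.val < n + 1) := by
      by_cases hD : IsDiagonal s(vp n p hpn, Fin.last (n + 1))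
      · have := hc s(vp n p hpn, Fin.last (n + 1))
          ((mem_glue ..).2 (Or.inr (Or.inr ⟨hD, Or.inr rfl⟩)))
        rw [cross_iff hab hL] at this
        simp only [vp_val, Fin.val_zero, Fin.val_last] at this; omega
      · rw [diag_iff hL] at hD
        simp only [vp_val, Fin.val_zero, Fin.val_last] at hD; omega
    rcases diag_cases hlp hn hl hr hpn hab he (by omega) with ⟨f, hf, hfe⟩ | ⟨f, hf, hfe⟩ | hfe
    · rw [← hfe, mem_glue_left hlp hl hr hpn ht.1 hf]
      refine hs.2.2 f hf fun g hg hcr => ?_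
      refine hc _ ((mem_glue_left hlp hl hr hpn ht.1 (hs.1 g hg)).2 hg) ?_
      rw [← hfe]
      exact (cross_map 0 hl hf.1 (hs.1 g hg).1).2 hcr
    · rw [← hfe, mem_glue_right hlp hn hl hr hpn hs.1 hf]
      refine ht.2.2 f hf fun g hg hcr => ?_
      refine hc _ ((mem_glue_right hlp hn hl hr hpn hs.1 (ht.1 g hg)).2 hg) ?_
      rw [← hfe]
      exact (cross_map p hr hf.1 (ht.1 g hg).1).2 hcr
    · exact (mem_glue ..).2 (Or.inr (Or.inr ⟨he, hfe⟩))

theorem side_or_diag {a b : Fin (n + 2)} (h : a < b) : IsSide s(a, b) ∨ IsDiagonal s(a, b) := by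
  rw [side_iff h, diag_iff h]
  simp only [Fin.lt_def] at h
  omega

theorem glue_mem_class (hlp : p = l + 1) (hn : n = p + r)
    (hl : 0 + l ≤ n) (hr : p + r ≤ n) (hpn : p ≤ n)
    {s : Finset (Sym2 (Fin (l + 2)))} {t : Finset (Sym2 (Fin (r + 2)))}
    (hs : IsTriangulation l s) (ht : IsTriangulation r t) :
    (⟨glue hl hr hpn s t, glue_isTri hlp hn hl hr hpn hs ht⟩ : Triangulation n) ∈
      orientedClass n p := by
  refine (class_iff (by omega) hpn _).2 ?_
  constructor
  · rcases side_or_diag (v0_lt (n := n) (p := p) (by omega) hpn) with h | h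
    · exact Or.inl h
    · exact Or.inr ((mem_glue ..).2 (Or.inr (Or.inr ⟨h, Or.inl rfl⟩)))
  · rcases side_or_diag (vl_lt (n := n) hpn) with h | h
    · exact Or.inl h
    · exact Or.inr ((mem_glue ..).2 (Or.inr (Or.inr ⟨h, Or.inr rfl⟩)))

theorem not_side_of_diag {e : Sym2 (Fin (n + 2))} (h : IsDiagonal e) : ¬ IsSide e := by
  rintro ⟨a, b, he, hp⟩
  exact h.2 a b he hp

theorem glue_restr (hlp : p = l + 1) (hn : n = p + r)
    (hl : 0 + l ≤ n) (hr : p + r ≤ n) (hpn : p ≤ n) {t : Triangulation n}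
    (ht : t ∈ orientedClass n p) :
    glue hl hr hpn (restr 0 hl t.val) (restr p hr t.val) = t.val := by
  obtain ⟨h1, h2⟩ := (class_iff (by omega) hpn t).1 ht
  ext e
  rw [mem_glue]
  constructor
  · rintro (⟨f, hf, rfl⟩ | ⟨f, hf, rfl⟩ | ⟨hd, rfl | rfl⟩)
    · exact ((mem_restr ..).1 hf).2
    · exact ((mem_restr ..).1 hf).2
    · exact h1.resolve_left (not_side_of_diag hd)
    · exact h2.resolve_left (not_side_of_diag hd)
  · intro he
    have hd := t.2.1 e he
    obtain ⟨a, b, hab, rfl⟩ := exists_lt hd.1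
    rcases diag_cases hlp hn hl hr hpn hab hd (class_sep (by omega) hpn ht hab he) with
      ⟨f, hf, hfe⟩ | ⟨f, hf, hfe⟩ | hfe
    · exact Or.inl ⟨f, (mem_restr ..).2 ⟨hf, hfe ▸ he⟩, hfe⟩
    · exact Or.inr (Or.inl ⟨f, (mem_restr ..).2 ⟨hf, hfe ▸ he⟩, hfe⟩)
    · exact Or.inr (Or.inr ⟨hd, hfe⟩)

theorem restr_left (hlp : p = l + 1) (hn : n = p + r)
    (hl : 0 + l ≤ n) (hpn : p ≤ n) {t : Triangulation n}
    (ht : t ∈ orientedClass n p) : IsTriangulation l (restr 0 hl t.val) := by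
  refine restr_isTri 0 hl t.2 fun c d hcd hm => ?_
  have := class_sep (by omega) hpn ht hcd hm
  omega

theorem restr_right (hlp : p = l + 1) (hn : n = p + r)
    (hr : p + r ≤ n) (hpn : p ≤ n) {t : Triangulation n}
    (ht : t ∈ orientedClass n p) : IsTriangulation r (restr p hr t.val) := by
  refine restr_isTri p hr t.2 fun c d hcd hm => ?_
  have := class_sep (by omega) hpn ht hcd hm
  have := d.2
  omega

/-- The bijection between the oriented class and pairs of triangulations. -/
noncomputable def classEquiv (hlp : p = l + 1) (hn : n = p + r)
    (hl : 0 + l ≤ n) (hr : p + r ≤ n) (hpn : p ≤ n) :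
    (Triangulation l × Triangulation r) ≃ orientedClass n p where
  toFun x := ⟨⟨glue hl hr hpn x.1.val x.2.val, glue_isTri hlp hn hl hr hpn x.1.2 x.2.2⟩,
    glue_mem_class hlp hn hl hr hpn x.1.2 x.2.2⟩
  invFun t := (⟨restr 0 hl t.1.val, restr_left hlp hn hl hpn t.2⟩,
    ⟨restr p hr t.1.val, restr_right hlp hn hr hpn t.2⟩)
  left_inv x := by
    refine Prod.ext (Subtype.ext ?_) (Subtype.ext ?_)
    · ext e
      change e ∈ restr 0 hl (glue hl hr hpn x.1.val x.2.val) ↔ _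
      rw [mem_restr]
      constructor
      · rintro ⟨hd, hm⟩
        exact (mem_glue_left hlp hl hr hpn x.2.2.1 hd).1 hm
      · intro hm
        exact ⟨x.1.2.1 e hm, (mem_glue_left hlp hl hr hpn x.2.2.1 (x.1.2.1 e hm)).2 hm⟩
    · ext e
      change e ∈ restr p hr (glue hl hr hpn x.1.val x.2.val) ↔ _
      rw [mem_restr]
      constructor
      · rintro ⟨hd, hm⟩
        exact (mem_glue_right hlp hn hl hr hpn x.1.2.1 hd).1 hm
      · intro hm
        exact ⟨x.2.2.1 e hm, (mem_glue_right hlp hn hl hr hpn x.1.2.1 (x.2.2.1 e hm)).2 hm⟩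
  right_inv t := by
    refine Subtype.ext (Subtype.ext ?_)
    exact glue_restr hlp hn hl hr hpn t.2

theorem card_glue_sdiff (hlp : p = l + 1) (hn : n = p + r)
    (hl : 0 + l ≤ n) (hr : p + r ≤ n) (hpn : p ≤ n)
    (s s' : Triangulation l) (t t' : Triangulation r) :
    (glue hl hr hpn s.val t.val \ glue hl hr hpn s'.val t'.val).card =
      (s.val \ s'.val).card + (t.val \ t'.val).card := by
  classical
  have key : glue hl hr hpn s.val t.val \ glue hl hr hpn s'.val t'.val =
      (s.val \ s'.val).image (Sym2.map (sh 0 hl)) ∪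
        (t.val \ t'.val).image (Sym2.map (sh p hr)) := by
    ext e
    simp only [Finset.mem_sdiff, Finset.mem_union, Finset.mem_image]
    constructor
    · rintro ⟨h1, h2⟩
      rcases (mem_glue ..).1 h1 with ⟨f, hf, rfl⟩ | ⟨f, hf, rfl⟩ | h3
      · rw [mem_glue_left hlp hl hr hpn t'.2.1 (s.2.1 f hf)] at h2
        exact Or.inl ⟨f, ⟨hf, h2⟩, rfl⟩
      · rw [mem_glue_right hlp hn hl hr hpn s'.2.1 (t.2.1 f hf)] at h2
        exact Or.inr ⟨f, ⟨hf, h2⟩, rfl⟩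
      · exact absurd ((mem_glue ..).2 (Or.inr (Or.inr h3))) h2
    · rintro (⟨f, ⟨hf, hf'⟩, rfl⟩ | ⟨f, ⟨hf, hf'⟩, rfl⟩)
      · rw [mem_glue_left hlp hl hr hpn t'.2.1 (s.2.1 f hf),
          mem_glue_left hlp hl hr hpn t.2.1 (s.2.1 f hf)]
        exact ⟨hf, hf'⟩
      · rw [mem_glue_right hlp hn hl hr hpn s'.2.1 (t.2.1 f hf),
          mem_glue_right hlp hn hl hr hpn s.2.1 (t.2.1 f hf)]
        exact ⟨hf, hf'⟩
  rw [key, Finset.card_union_of_disjoint, Finset.card_image_of_injective _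
    (Sym2.map.injective (sh_inj 0 hl)), Finset.card_image_of_injective _
    (Sym2.map.injective (sh_inj p hr))]
  rw [Finset.disjoint_left]
  intro e he he'
  simp only [Finset.mem_sdiff, Finset.mem_image] at he he'
  obtain ⟨f, ⟨hf, hf'⟩, rfl⟩ := he
  obtain ⟨g, ⟨hg, hg'⟩, hgf⟩ := he'
  have h1 : Sym2.map (sh p hr) g ∈ glue hl hr hpn s'.val t.val :=
    (mem_glue_right hlp hn hl hr hpn s'.2.1 (t.2.1 g hg)).2 hg
  rw [hgf, mem_glue_left hlp hl hr hpn t.2.1 (s.2.1 f hf)] at h1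
  exact hf' h1

end

theorem tri_sdiff_zero {n : ℕ} (s t : Triangulation n) : (s.val \ t.val).card = 0 ↔ s = t := by
  rw [Finset.card_eq_zero, Finset.sdiff_eq_empty_iff_subset]
  constructor
  · intro h
    exact Subtype.ext (tri_eq_of_subset s.2 t.2 h)
  · rintro rfl
    exact Finset.Subset.refl _

theorem class_iso_aux (n p l r : ℕ) (hlp : p = l + 1) (hn : n = p + r) :
    Nonempty (((assocGraph n).induce (orientedClass n p)) ≃g
      (assocGraph l).boxProd (assocGraph r)) := by
  have hl : 0 + l ≤ n := by omega
  have hr : p + r ≤ n := by omega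
  have hpn : p ≤ n := by omega
  refine ⟨RelIso.symm ⟨classEquiv hlp hn hl hr hpn, ?_⟩⟩
  rintro ⟨s, t⟩ ⟨s', t'⟩
  rw [SimpleGraph.boxProd_adj]
  change ((glue hl hr hpn s.val t.val \ glue hl hr hpn s'.val t'.val).card = 1 ∧
    (glue hl hr hpn s'.val t'.val \ glue hl hr hpn s.val t.val).card = 1) ↔
    (((s.val \ s'.val).card = 1 ∧ (s'.val \ s.val).card = 1) ∧ t = t') ∨
    (((t.val \ t'.val).card = 1 ∧ (t'.val \ t.val).card = 1) ∧ s = s')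
  rw [card_glue_sdiff hlp hn, card_glue_sdiff hlp hn]
  have a1 := tri_sdiff_zero s s'
  have a2 := tri_sdiff_zero s' s
  have a3 := tri_sdiff_zero t t'
  have a4 := tri_sdiff_zero t' t
  rw [eq_comm] at a2 a4
  have a2' : (s'.val \ s.val).card = 0 ↔ s = s' := by rw [tri_sdiff_zero, eq_comm]
  have a4' : (t'.val \ t.val).card = 0 ↔ t = t' := by rw [tri_sdiff_zero, eq_comm]
  rw [← a1, ← a3]
  rw [← a1] at a2'
  rw [← a3] at a4'
  clear a1 a2 a3 a4
  omega

/-- for every `n ≥ 2` and `1 ≤ p ≤ n`, the subgraph of the associahedron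
`K_n` induced by the oriented class `Θ_{T_p}` is isomorphic to the Cartesian product
`K_{p-1} □ K_{n-p}`; in particular each oriented class induces a product `K_l □ K_r`
with `l + r = n - 1`. -/
theorem orientedClass_isomorphic_boxProd (n p : ℕ) (hn : 2 ≤ n) (hp : 1 ≤ p)
    (hpn : p ≤ n) :
    Nonempty (((assocGraph n).induce (orientedClass n p)) ≃g
      (assocGraph (p - 1)).boxProd (assocGraph (n - p))) := by
  exact class_iso_aux n p (p - 1) (n - p) (by omega) (by omega)
end

section
/- For every n ≥ 2 and all 1 ≤ p < q ≤ n, the boundary set ∂_{p,q} (the set of triangulations in the oriented class Θ_{T_p} having a neighbor in Θ_{T_q}) induces a subgraph of K_n isomorphic to the Cartesian product K_{p−1} □ K_{q−p−1} □ K_{n−q}; in particular each such boundary induces a product K_i □ K_j □ K_k with i + j + k = n − 2. The symmetric statement holds for ∂_{q,p} ⊆ Θ_{T_q}. -/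
open Finset

/-! ### Triangulations in terms of ordered pairs of naturals -/

namespace AssocAux

/-- `(a, b)` is a diagonal of the polygon with vertices `lo, …, hi`. -/
def D (lo hi : ℕ) (e : ℕ × ℕ) : Prop :=
  lo ≤ e.1 ∧ e.1 + 2 ≤ e.2 ∧ e.2 ≤ hi ∧ (lo < e.1 ∨ e.2 < hi)

instance (lo hi : ℕ) : DecidablePred (D lo hi) := fun e => by
  unfold D; infer_instance

/-- Crossing of ordered pairs. -/
def X (e f : ℕ × ℕ) : Prop :=
  (e.1 < f.1 ∧ f.1 < e.2 ∧ e.2 < f.2) ∨ (f.1 < e.1 ∧ e.1 < f.2 ∧ f.2 < e.2)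

def NTri (lo hi : ℕ) (T : Finset (ℕ × ℕ)) : Prop :=
  (∀ e ∈ T, D lo hi e) ∧ (∀ e ∈ T, ∀ f ∈ T, ¬ X e f) ∧
  (∀ e, D lo hi e → (∀ f ∈ T, ¬ X e f) → e ∈ T)

def NG (lo hi : ℕ) : SimpleGraph {T : Finset (ℕ × ℕ) // NTri lo hi T} where
  Adj s t := (s.val \ t.val).card = 1 ∧ (t.val \ s.val).card = 1
  symm := ⟨fun s t h => ⟨h.2, h.1⟩⟩
  loopless := ⟨fun s h => by simp at h⟩

/-- The ordered pair of an unordered pair, shifted by `a`. -/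
def phi {m : ℕ} (a : ℕ) (e : Sym2 (Fin m)) : ℕ × ℕ := (a + e.inf.val, a + e.sup.val)

lemma phi_mk {m : ℕ} (a : ℕ) (x y : Fin m) (h : x ≤ y) :
    phi a s(x, y) = (a + x.val, a + y.val) := by
  simp [phi, h]

lemma exists_rep {m : ℕ} (e : Sym2 (Fin m)) : ∃ x y : Fin m, x ≤ y ∧ e = s(x, y) := by
  induction e using Sym2.ind with
  | _ x y =>
    rcases le_total x y with h | h
    · exact ⟨x, y, h, rfl⟩
    · exact ⟨y, x, h, Sym2.eq_swap⟩

lemma phi_inj {m : ℕ} (a : ℕ) : Function.Injective (phi a : Sym2 (Fin m) → ℕ × ℕ) := by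
  intro e f h
  obtain ⟨x, y, hxy, rfl⟩ := exists_rep e
  obtain ⟨z, w, hzw, rfl⟩ := exists_rep f
  rw [phi_mk a x y hxy, phi_mk a z w hzw, Prod.mk.injEq] at h
  have h1 : x = z := Fin.ext (by omega)
  have h2 : y = w := Fin.ext (by omega)
  rw [h1, h2]

lemma sub_val {m : ℕ} (x y : Fin m) :
    (x - y).val = if y.val ≤ x.val then x.val - y.val else m + x.val - y.val := by
  have hx := x.isLt
  have hy := y.isLt
  rw [Fin.val_sub]
  split_ifs with h
  · rw [show m - y.val + x.val = (x.val - y.val) + m by omega, Nat.add_mod_right,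
      Nat.mod_eq_of_lt (by omega)]
  · rw [Nat.mod_eq_of_lt (by omega)]; omega

lemma polyAdj_iff {n : ℕ} (x y : Fin (n + 2)) (h : x ≤ y) :
    PolyAdj x y ↔ (y.val = x.val + 1 ∨ (x.val = 0 ∧ y.val = n + 1)) := by
  have hx := x.isLt
  have hy := y.isLt
  rw [Fin.le_def] at h
  unfold PolyAdj
  rw [sub_val, sub_val]
  split_ifs <;> omega

lemma polyAdj_comm {m : ℕ} (x y : Fin m) : PolyAdj x y ↔ PolyAdj y x := by
  unfold PolyAdj; exact or_comm

lemma isSide_iff {n : ℕ} (x y : Fin (n + 2)) (h : x ≤ y) :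
    IsSide s(x, y) ↔ (y.val = x.val + 1 ∨ (x.val = 0 ∧ y.val = n + 1)) := by
  rw [← polyAdj_iff x y h]
  constructor
  · rintro ⟨a, b, he, hp⟩
    rcases Sym2.eq_iff.1 he with ⟨rfl, rfl⟩ | ⟨rfl, rfl⟩
    · exact hp
    · exact (polyAdj_comm _ _).1 hp
  · intro hp
    exact ⟨x, y, rfl, hp⟩

lemma isDiagonal_iff {n : ℕ} (a : ℕ) (e : Sym2 (Fin (n + 2))) :
    IsDiagonal e ↔ D a (a + n + 1) (phi a e) := by
  obtain ⟨x, y, hxy, rfl⟩ := exists_rep e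
  have hx := x.isLt
  have hy := y.isLt
  have key : IsDiagonal s(x, y) ↔ (x ≠ y ∧ ¬ PolyAdj x y) := by
    unfold IsDiagonal
    rw [Sym2.mk_isDiag_iff]
    constructor
    · rintro ⟨h1, h2⟩
      exact ⟨h1, h2 x y rfl⟩
    · rintro ⟨h1, h2⟩
      refine ⟨h1, fun c d he hp => h2 ?_⟩
      rcases Sym2.eq_iff.1 he with ⟨rfl, rfl⟩ | ⟨rfl, rfl⟩
      · exact hp
      · exact (polyAdj_comm _ _).1 hp
  rw [key, polyAdj_iff x y hxy, phi_mk a x y hxy, Ne, Fin.ext_iff]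
  rw [Fin.le_def] at hxy
  simp only [D]
  omega

lemma crosses_iff {m : ℕ} (a : ℕ) (e f : Sym2 (Fin m)) :
    Crosses e f ↔ X (phi a e) (phi a f) := by
  obtain ⟨x, y, hxy, rfl⟩ := exists_rep e
  obtain ⟨z, w, hzw, rfl⟩ := exists_rep f
  have hx := x.isLt
  have hy := y.isLt
  have hz := z.isLt
  have hw := w.isLt
  have key1 : ∀ c d : Fin m, (∃ c' d' : Fin m, s(z, w) = s(c', d') ∧
      Xor' (CycBtw c d c') (CycBtw c d d')) ↔ Xor' (CycBtw c d z) (CycBtw c d w) := by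
    intro c d
    constructor
    · rintro ⟨c', d', he, hp⟩
      rcases Sym2.eq_iff.1 he with ⟨rfl, rfl⟩ | ⟨rfl, rfl⟩
      · exact hp
      · exact Or.symm hp
    · intro h
      exact ⟨z, w, rfl, h⟩
  have key : Crosses s(x, y) s(z, w) ↔ (Xor' (CycBtw x y z) (CycBtw x y w) ∧
      Xor' (CycBtw y x z) (CycBtw y x w)) := by
    unfold Crosses
    simp only [key1]
    constructor
    · intro h
      exact ⟨h x y rfl, h y x Sym2.eq_swap⟩
    · rintro ⟨h1, h2⟩ c d he
      rcases Sym2.eq_iff.1 he with ⟨rfl, rfl⟩ | ⟨rfl, rfl⟩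
      · exact h1
      · exact h2
  rw [key, phi_mk a x y hxy, phi_mk a z w hzw]
  rw [Fin.le_def] at hxy hzw
  have b1 : ∀ u : Fin m, CycBtw x y u ↔ (x.val < u.val ∧ u.val < y.val) := by
    intro u
    have hu := u.isLt
    unfold CycBtw
    rw [sub_val, sub_val]
    split_ifs <;> omega
  have b2 : ∀ u : Fin m, CycBtw y x u ↔ (x.val < y.val ∧ (y.val < u.val ∨ u.val < x.val)) := by
    intro u
    have hu := u.isLt
    unfold CycBtw
    rw [sub_val, sub_val]
    split_ifs <;> omega
  rw [b1, b1, b2, b2]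
  simp only [X, Xor', Xor]
  omega

lemma exists_phi {n a : ℕ} {e : ℕ × ℕ} (h : D a (a + n + 1) e) :
    ∃ e' : Sym2 (Fin (n + 2)), phi a e' = e := by
  obtain ⟨x, y⟩ := e
  simp only [D] at h
  refine ⟨s(⟨x - a, by omega⟩, ⟨y - a, by omega⟩), ?_⟩
  rw [phi_mk _ _ _ (by rw [Fin.mk_le_mk]; omega)]
  simp only [Prod.mk.injEq]
  omega

lemma mem_image_phi {m a : ℕ} {t : Finset (Sym2 (Fin m))} {e : Sym2 (Fin m)} :
    phi a e ∈ t.image (phi a) ↔ e ∈ t := by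
  rw [Finset.mem_image]
  constructor
  · rintro ⟨f, hf, h⟩
    rwa [← phi_inj a h]
  · intro h
    exact ⟨e, h, rfl⟩

lemma isTri_iff (n a : ℕ) (t : Finset (Sym2 (Fin (n + 2)))) :
    IsTriangulation n t ↔ NTri a (a + n + 1) (t.image (phi a)) := by
  unfold IsTriangulation NTri
  simp only [Finset.forall_mem_image, isDiagonal_iff a, crosses_iff a]
  refine and_congr Iff.rfl (and_congr Iff.rfl ?_)
  constructor
  · intro h e he h2
    obtain ⟨e', rfl⟩ := exists_phi he
    exact mem_image_phi.2 (h e' he h2)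
  · intro h e he h2
    exact mem_image_phi.1 (h _ he h2)

noncomputable def trEquiv (n a b : ℕ) (hb : b = a + n + 1) :
    Triangulation n ≃ {T : Finset (ℕ × ℕ) // NTri a b T} :=
  Equiv.ofBijective (fun t => ⟨t.val.image (phi a), by
      subst hb; exact (isTri_iff n a t.val).1 t.property⟩) (by
    subst hb
    constructor
    · intro s t h
      exact Subtype.ext (Finset.image_injective (phi_inj a) (Subtype.ext_iff.1 h))
    · rintro ⟨T, hT⟩
      have him : (Finset.univ.filter (fun e : Sym2 (Fin (n + 2)) => phi a e ∈ T)).image (phi a)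
          = T := by
        ext e
        simp only [Finset.mem_image, Finset.mem_filter, Finset.mem_univ, true_and]
        constructor
        · rintro ⟨e', h, rfl⟩
          exact h
        · intro h
          obtain ⟨e', rfl⟩ := exists_phi (hT.1 e h)
          exact ⟨e', h, rfl⟩
      refine ⟨⟨Finset.univ.filter (fun e : Sym2 (Fin (n + 2)) => phi a e ∈ T), ?_⟩, ?_⟩
      · rw [isTri_iff n a, him]
        exact hT
      · exact Subtype.ext him)

lemma trEquiv_val (n a b : ℕ) (hb : b = a + n + 1) (t : Triangulation n) :
    (trEquiv n a b hb t).val = t.val.image (phi a) := rfl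

lemma trEquiv_adj (n a b : ℕ) (hb : b = a + n + 1) (s t : Triangulation n) :
    (NG a b).Adj (trEquiv n a b hb s) (trEquiv n a b hb t) ↔ (assocGraph n).Adj s t := by
  simp only [NG, assocGraph, trEquiv_val]
  rw [← Finset.image_sdiff _ _ (phi_inj a), ← Finset.image_sdiff _ _ (phi_inj a),
    Finset.card_image_of_injective _ (phi_inj a), Finset.card_image_of_injective _ (phi_inj a)]

noncomputable def trIso (n a b : ℕ) (hb : b = a + n + 1) : assocGraph n ≃g NG a b where
  toEquiv := trEquiv n a b hb
  map_rel_iff' := trEquiv_adj n a b hb _ _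

def boxCongr {A A' B B' : Type*} {G : SimpleGraph A} {G' : SimpleGraph A'} {H : SimpleGraph B}
    {H' : SimpleGraph B'} (f : G ≃g G') (g : H ≃g H') : G.boxProd H ≃g G'.boxProd H' where
  toEquiv := Equiv.prodCongr f.toEquiv g.toEquiv
  map_rel_iff' := by
    rintro ⟨a, b⟩ ⟨c, d⟩
    simp [SimpleGraph.boxProd_adj, SimpleGraph.Iso.map_adj_iff]

/-- `(a, b)` is a side or a member of `T`. -/
def Ed (T : Finset (ℕ × ℕ)) (a b : ℕ) : Prop := b = a + 1 ∨ (a, b) ∈ T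

lemma edgeOfT_iff {n : ℕ} (t : Triangulation n) (x y : Fin (n + 2)) (h : x ≤ y)
    (h2 : 0 < x.val ∨ y.val < n + 1) :
    EdgeOfT t s(x, y) ↔ Ed (t.val.image (phi 0)) x.val y.val := by
  unfold EdgeOfT Ed
  rw [isSide_iff x y h, ← mem_image_phi (a := 0), phi_mk 0 x y h, Nat.zero_add, Nat.zero_add]
  have : ¬ (x.val = 0 ∧ y.val = n + 1) := by omega
  tauto

lemma orientedClass_iff (n p : ℕ) (hp : 1 ≤ p) (hpn : p ≤ n) (t : Triangulation n) :
    t ∈ orientedClass n p ↔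
      (Ed (t.val.image (phi 0)) 0 p ∧ Ed (t.val.image (phi 0)) p (n + 1)) := by
  have key : ∀ P N : Fin (n + 2), P.val = p → N.val = n + 1 →
      (IsTriangleOf t 0 P N ↔
      (Ed (t.val.image (phi 0)) 0 p ∧ Ed (t.val.image (phi 0)) p (n + 1))) := by
    intro P N hP hN
    unfold IsTriangleOf
    have h0 : (0 : Fin (n + 2)).val = 0 := rfl
    rw [edgeOfT_iff t 0 P (by rw [Fin.le_def]; omega) (by omega),
      edgeOfT_iff t P N (by rw [Fin.le_def]; omega) (by omega), hP, hN, h0]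
    have h1 : (0 : Fin (n + 2)) ≠ P := by rw [Ne, Fin.ext_iff]; omega
    have h2 : P ≠ N := by rw [Ne, Fin.ext_iff]; omega
    have h3 : (0 : Fin (n + 2)) ≠ N := by rw [Ne, Fin.ext_iff]; omega
    have h4 : EdgeOfT t s(0, N) :=
      Or.inl ((isSide_iff 0 N (by rw [Fin.le_def]; omega)).2 (Or.inr ⟨h0, hN⟩))
    tauto
  unfold orientedClass
  exact key _ _ (by rw [Fin.val_natCast, Nat.mod_eq_of_lt (by omega)])
    (by rw [Fin.val_natCast, Nat.mod_eq_of_lt (by omega)])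

/-! ### Cutting along the quadrilateral `0, p, q, N` -/

/-- Triangulations containing the quadrilateral `0, p, q, N` split by the diagonal `d`. -/
def Bd (N p q : ℕ) (d : ℕ × ℕ) (T : Finset (ℕ × ℕ)) : Prop :=
  Ed T 0 p ∧ Ed T p q ∧ Ed T q N ∧ d ∈ T

def Gl (N p q : ℕ) (d : ℕ × ℕ) (T1 T2 T3 : Finset (ℕ × ℕ)) : Finset (ℕ × ℕ) :=
  T1 ∪ T2 ∪ T3 ∪ ({(0, p), (p, q), (q, N), d} : Finset (ℕ × ℕ)).filter (D 0 N)

lemma mem_Gl {N p q : ℕ} {d : ℕ × ℕ} {T1 T2 T3 : Finset (ℕ × ℕ)} {e : ℕ × ℕ} :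
    e ∈ Gl N p q d T1 T2 T3 ↔ (e ∈ T1 ∨ e ∈ T2 ∨ e ∈ T3 ∨
      ((e = (0, p) ∨ e = (p, q) ∨ e = (q, N) ∨ e = d) ∧ D 0 N e)) := by
  simp only [Gl, Finset.mem_union, Finset.mem_filter, Finset.mem_insert, Finset.mem_singleton]
  tauto

lemma cls {N p q : ℕ} {d e : ℕ × ℕ} (hp : 0 < p) (hpq : p < q) (hq : q < N)
    (hd : d = (p, N) ∨ d = (0, q)) (he : D 0 N e) (h1 : ¬ X e (0, p)) (h2 : ¬ X e (p, q))
    (h3 : ¬ X e (q, N)) (h4 : ¬ X e d) :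
    D 0 p e ∨ D p q e ∨ D q N e ∨ e = (0, p) ∨ e = (p, q) ∨ e = (q, N) ∨ e = d := by
  obtain ⟨x, y⟩ := e
  rcases hd with rfl | rfl
  all_goals
    simp only [D, X, Prod.mk.injEq] at *
    omega

lemma not_X_of_Ed {N a b : ℕ} {T : Finset (ℕ × ℕ)} {e : ℕ × ℕ} (hT : NTri 0 N T)
    (h : Ed T a b) (he : e ∈ T) : ¬ X e (a, b) := by
  rcases h with h | h
  · simp only [X]; omega
  · exact hT.2.1 e he _ h

lemma X_comm {e f : ℕ × ℕ} (h : X e f) : X f e := by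
  simp only [X] at *; omega

lemma mem_cls {N p q : ℕ} {d e : ℕ × ℕ} {T : Finset (ℕ × ℕ)} (hp : 0 < p) (hpq : p < q)
    (hq : q < N) (hd : d = (p, N) ∨ d = (0, q)) (hT : NTri 0 N T) (hB : Bd N p q d T)
    (he : e ∈ T) :
    D 0 p e ∨ D p q e ∨ D q N e ∨ e = (0, p) ∨ e = (p, q) ∨ e = (q, N) ∨ e = d :=
  cls hp hpq hq hd (hT.1 e he) (not_X_of_Ed hT hB.1 he) (not_X_of_Ed hT hB.2.1 he)
    (not_X_of_Ed hT hB.2.2.1 he) (hT.2.1 e he d hB.2.2.2)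

lemma restrict {N a b : ℕ} {T : Finset (ℕ × ℕ)} (hT : NTri 0 N T) (hb : b ≤ N)
    (h : Ed T a b) : NTri a b (T.filter (D a b)) := by
  refine ⟨fun e he => (Finset.mem_filter.1 he).2, fun e he f hf =>
    hT.2.1 e (Finset.mem_filter.1 he).1 f (Finset.mem_filter.1 hf).1, fun e he hn => ?_⟩
  refine Finset.mem_filter.2 ⟨hT.2.2 e ?_ ?_, he⟩
  · simp only [D] at *; omega
  · intro f hf hX
    refine hn f (Finset.mem_filter.2 ⟨hf, ?_⟩) hX
    have h1 := not_X_of_Ed hT h hf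
    have h2 := hT.1 f hf
    simp only [D, X] at *
    omega

lemma Ed_of_Gl {N p q : ℕ} {d : ℕ × ℕ} {T1 T2 T3 : Finset (ℕ × ℕ)} (hp : 0 < p) (hpq : p < q)
    (hq : q < N) (hd : d = (p, N) ∨ d = (0, q)) : Bd N p q d (Gl N p q d T1 T2 T3) := by
  have hD : D 0 N d := by
    rcases hd with rfl | rfl
    all_goals simp only [D]; omega
  refine ⟨?_, ?_, ?_, mem_Gl.2 (by tauto)⟩
  · by_cases h : p = 0 + 1
    · exact Or.inl h
    · refine Or.inr (mem_Gl.2 (Or.inr (Or.inr (Or.inr ⟨by tauto, ?_⟩))))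
      simp only [D]; omega
  · by_cases h : q = p + 1
    · exact Or.inl h
    · refine Or.inr (mem_Gl.2 (Or.inr (Or.inr (Or.inr ⟨by tauto, ?_⟩))))
      simp only [D]; omega
  · by_cases h : N = q + 1
    · exact Or.inl h
    · refine Or.inr (mem_Gl.2 (Or.inr (Or.inr (Or.inr ⟨by tauto, ?_⟩))))
      simp only [D]; omega

/-- If `e` crosses no member of `T` then it crosses no edge. -/
lemma not_X_Ed' {a b : ℕ} {T : Finset (ℕ × ℕ)} {e : ℕ × ℕ} (h : ∀ f ∈ T, ¬ X e f)
    (hE : Ed T a b) : ¬ X e (a, b) := by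
  rcases hE with h' | h'
  · simp only [X]; omega
  · exact h _ h'

lemma glue {N p q : ℕ} {d : ℕ × ℕ} {T1 T2 T3 : Finset (ℕ × ℕ)} (hp : 0 < p) (hpq : p < q)
    (hq : q < N) (hd : d = (p, N) ∨ d = (0, q)) (h1 : NTri 0 p T1) (h2 : NTri p q T2)
    (h3 : NTri q N T3) : NTri 0 N (Gl N p q d T1 T2 T3) := by
  have hB : Bd N p q d (Gl N p q d T1 T2 T3) := Ed_of_Gl hp hpq hq hd
  refine ⟨fun e he => ?_, fun e he f hf => ?_, fun e he hn => ?_⟩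
  · rcases mem_Gl.1 he with h | h | h | h
    · have := h1.1 e h
      simp only [D] at *; omega
    · have := h2.1 e h
      simp only [D] at *; omega
    · have := h3.1 e h
      simp only [D] at *; omega
    · exact h.2
  · have sep : ∀ {a b a' b' : ℕ}, b ≤ a' → D a b e → D a' b' f → ¬ X e f := by
      intro a b a' b' hb he hf
      simp only [D, X] at *; omega
    have sep' : ∀ {a b a' b' : ℕ}, b' ≤ a → D a b e → D a' b' f → ¬ X e f := by
      intro a b a' b' hb he hf
      simp only [D, X] at *; omega
    have quad : ∀ {g k : ℕ × ℕ}, (D 0 p g ∨ D p q g ∨ D q N g) →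
        (k = (0, p) ∨ k = (p, q) ∨ k = (q, N) ∨ k = d) → ¬ X g k := by
      rintro ⟨g1, g2⟩ ⟨k1, k2⟩ hg hk
      rcases hd with rfl | rfl
      all_goals
        simp only [D, X, Prod.mk.injEq] at *
        omega
    have quad2 : ∀ {g k : ℕ × ℕ}, (g = (0, p) ∨ g = (p, q) ∨ g = (q, N) ∨ g = d) →
        (k = (0, p) ∨ k = (p, q) ∨ k = (q, N) ∨ k = d) → ¬ X g k := by
      rintro ⟨g1, g2⟩ ⟨k1, k2⟩ hg hk
      rcases hd with rfl | rfl
      all_goals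
        simp only [X, Prod.mk.injEq] at *
        omega
    rcases mem_Gl.1 he with he | he | he | he <;> rcases mem_Gl.1 hf with hf | hf | hf | hf
    · exact h1.2.1 e he f hf
    · exact sep le_rfl (h1.1 e he) (h2.1 f hf)
    · exact sep hpq.le (h1.1 e he) (h3.1 f hf)
    · exact quad (Or.inl (h1.1 e he)) hf.1
    · exact sep' le_rfl (h2.1 e he) (h1.1 f hf)
    · exact h2.2.1 e he f hf
    · exact sep le_rfl (h2.1 e he) (h3.1 f hf)
    · exact quad (Or.inr (Or.inl (h2.1 e he))) hf.1
    · exact sep' hpq.le (h3.1 e he) (h1.1 f hf)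
    · exact sep' le_rfl (h3.1 e he) (h2.1 f hf)
    · exact h3.2.1 e he f hf
    · exact quad (Or.inr (Or.inr (h3.1 e he))) hf.1
    · exact fun hx => quad (Or.inl (h1.1 f hf)) he.1 (X_comm hx)
    · exact fun hx => quad (Or.inr (Or.inl (h2.1 f hf))) he.1 (X_comm hx)
    · exact fun hx => quad (Or.inr (Or.inr (h3.1 f hf))) he.1 (X_comm hx)
    · exact quad2 he.1 hf.1
  · rcases cls hp hpq hq hd he (not_X_Ed' hn hB.1) (not_X_Ed' hn hB.2.1)
      (not_X_Ed' hn hB.2.2.1) (hn d hB.2.2.2) with h | h | h | h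
    · exact mem_Gl.2 (Or.inl (h1.2.2 e h fun f hf => hn f (mem_Gl.2 (Or.inl hf))))
    · exact mem_Gl.2 (Or.inr (Or.inl (h2.2.2 e h fun f hf =>
        hn f (mem_Gl.2 (Or.inr (Or.inl hf))))))
    · exact mem_Gl.2 (Or.inr (Or.inr (Or.inl (h3.2.2 e h fun f hf =>
        hn f (mem_Gl.2 (Or.inr (Or.inr (Or.inl hf))))))))
    · exact mem_Gl.2 (Or.inr (Or.inr (Or.inr ⟨h, he⟩)))

lemma Ed_mem {a b N : ℕ} {T : Finset (ℕ × ℕ)} (hE : Ed T a b) (hD : D 0 N (a, b)) :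
    (a, b) ∈ T := by
  rcases hE with h | h
  · simp only [D] at hD; omega
  · exact h

lemma quad_mem {N p q : ℕ} {d e : ℕ × ℕ} {T : Finset (ℕ × ℕ)} (hB : Bd N p q d T)
    (h : e = (0, p) ∨ e = (p, q) ∨ e = (q, N) ∨ e = d) (hD : D 0 N e) : e ∈ T := by
  rcases h with rfl | rfl | rfl | rfl
  · exact Ed_mem hB.1 hD
  · exact Ed_mem hB.2.1 hD
  · exact Ed_mem hB.2.2.1 hD
  · exact hB.2.2.2

lemma glue_restrict {N p q : ℕ} {d : ℕ × ℕ} {T : Finset (ℕ × ℕ)} (hp : 0 < p) (hpq : p < q)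
    (hq : q < N) (hd : d = (p, N) ∨ d = (0, q)) (hT : NTri 0 N T) (hB : Bd N p q d T) :
    Gl N p q d (T.filter (D 0 p)) (T.filter (D p q)) (T.filter (D q N)) = T := by
  ext e
  rw [mem_Gl]
  simp only [Finset.mem_filter]
  constructor
  · rintro (h | h | h | h)
    · exact h.1
    · exact h.1
    · exact h.1
    · exact quad_mem hB h.1 h.2
  · intro h
    have h1 := mem_cls hp hpq hq hd hT hB h
    have h2 := hT.1 e h
    tauto

lemma restrict_glue {N p q : ℕ} {d : ℕ × ℕ} {T1 T2 T3 : Finset (ℕ × ℕ)} (hp : 0 < p)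
    (hpq : p < q) (hq : q < N) (hd : d = (p, N) ∨ d = (0, q)) (h1 : NTri 0 p T1)
    (h2 : NTri p q T2) (h3 : NTri q N T3) :
    (Gl N p q d T1 T2 T3).filter (D 0 p) = T1 ∧ (Gl N p q d T1 T2 T3).filter (D p q) = T2 ∧
    (Gl N p q d T1 T2 T3).filter (D q N) = T3 := by
  have s12 : ∀ e, D 0 p e → D p q e → False := by
    intro e; simp only [D]; omega
  have s13 : ∀ e, D 0 p e → D q N e → False := by
    intro e; simp only [D]; omega
  have s23 : ∀ e, D p q e → D q N e → False := by
    intro e; simp only [D]; omega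
  have s4 : ∀ e, (D 0 p e ∨ D p q e ∨ D q N e) →
      (e = (0, p) ∨ e = (p, q) ∨ e = (q, N) ∨ e = d) → False := by
    rintro ⟨x, y⟩
    rcases hd with rfl | rfl
    all_goals
      simp only [D, Prod.mk.injEq]
      omega
  refine ⟨?_, ?_, ?_⟩
  all_goals
    ext e
    rw [Finset.mem_filter, mem_Gl]
    have := h1.1 e
    have := h2.1 e
    have := h3.1 e
    have := s12 e
    have := s13 e
    have := s23 e
    have := s4 e
    grind

lemma card_split {N p q : ℕ} {d : ℕ × ℕ} {S T : Finset (ℕ × ℕ)} (hp : 0 < p)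
    (hpq : p < q) (hq : q < N) (hd : d = (p, N) ∨ d = (0, q)) (hS : NTri 0 N S)
    (hBS : Bd N p q d S) (hBT : Bd N p q d T) :
    (S \ T).card = (S.filter (D 0 p) \ T.filter (D 0 p)).card +
      ((S.filter (D p q) \ T.filter (D p q)).card +
        (S.filter (D q N) \ T.filter (D q N)).card) := by
  have s12 : ∀ e, D 0 p e → D p q e → False := by
    intro e; simp only [D]; omega
  have s13 : ∀ e, D 0 p e → D q N e → False := by
    intro e; simp only [D]; omega
  have s23 : ∀ e, D p q e → D q N e → False := by
    intro e; simp only [D]; omega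
  rw [← Finset.card_union_of_disjoint, ← Finset.card_union_of_disjoint]
  · congr 1
    ext e
    simp only [Finset.mem_union, Finset.mem_sdiff, Finset.mem_filter]
    have a1 : e ∈ S → _ := fun h => mem_cls hp hpq hq hd hS hBS h
    have a2 : e ∈ S → D 0 N e := fun h => hS.1 e h
    have a3 := fun h => quad_mem (e := e) hBT h
    tauto
  · rw [Finset.disjoint_left]
    intro e
    simp only [Finset.mem_union, Finset.mem_sdiff, Finset.mem_filter]
    have := s12 e
    have := s13 e
    tauto
  · rw [Finset.disjoint_left]
    intro e
    simp only [Finset.mem_sdiff, Finset.mem_filter]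
    have := s23 e
    tauto

lemma eq_of_card_zero {lo hi : ℕ} {S T : Finset (ℕ × ℕ)} (hS : NTri lo hi S)
    (hT : NTri lo hi T) : (S \ T).card = 0 ↔ S = T := by
  constructor
  · intro h
    rw [Finset.card_eq_zero, Finset.sdiff_eq_empty_iff_subset] at h
    refine Finset.Subset.antisymm h fun e he => ?_
    exact hS.2.2 e (hT.1 e he) fun f hf => hT.2.1 e he f (h hf)
  · rintro rfl
    simp

def BdSet (N p q : ℕ) (d : ℕ × ℕ) : Set {T : Finset (ℕ × ℕ) // NTri 0 N T} :=
  {T | Bd N p q d T.val}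

def cutEquiv {N p q : ℕ} {d : ℕ × ℕ} (hp : 0 < p) (hpq : p < q) (hq : q < N)
    (hd : d = (p, N) ∨ d = (0, q)) :
    BdSet N p q d ≃ {T : Finset (ℕ × ℕ) // NTri 0 p T} ×
      ({T : Finset (ℕ × ℕ) // NTri p q T} × {T : Finset (ℕ × ℕ) // NTri q N T}) where
  toFun T := (⟨T.1.1.filter (D 0 p), restrict T.1.2 (by omega) T.2.1⟩,
    ⟨T.1.1.filter (D p q), restrict T.1.2 (by omega) T.2.2.1⟩,
    ⟨T.1.1.filter (D q N), restrict T.1.2 le_rfl T.2.2.2.1⟩)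
  invFun R := ⟨⟨Gl N p q d R.1.1 R.2.1.1 R.2.2.1,
    glue hp hpq hq hd R.1.2 R.2.1.2 R.2.2.2⟩, Ed_of_Gl hp hpq hq hd⟩
  left_inv T := Subtype.ext (Subtype.ext (glue_restrict hp hpq hq hd T.1.2 T.2))
  right_inv R := by
    obtain ⟨h1, h2, h3⟩ := restrict_glue (d := d) hp hpq hq hd R.1.2 R.2.1.2 R.2.2.2
    exact Prod.ext (Subtype.ext h1) (Prod.ext (Subtype.ext h2) (Subtype.ext h3))

def cutIso {N p q : ℕ} {d : ℕ × ℕ} (hp : 0 < p) (hpq : p < q) (hq : q < N)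
    (hd : d = (p, N) ∨ d = (0, q)) :
    (NG 0 N).induce (BdSet N p q d) ≃g (NG 0 p).boxProd ((NG p q).boxProd (NG q N)) where
  toEquiv := cutEquiv hp hpq hq hd
  map_rel_iff' := by
    rintro ⟨⟨S, hS⟩, hBS⟩ ⟨⟨T, hT⟩, hBT⟩
    have hBS' : Bd N p q d S := hBS
    have hBT' : Bd N p q d T := hBT
    have c1 := card_split hp hpq hq hd hS hBS' hBT'
    have c2 := card_split hp hpq hq hd hT hBT' hBS'
    have r1 := restrict hS (by omega : p ≤ N) hBS'.1
    have r2 := restrict hS (by omega : q ≤ N) hBS'.2.1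
    have r3 := restrict hS le_rfl hBS'.2.2.1
    have t1 := restrict hT (by omega : p ≤ N) hBT'.1
    have t2 := restrict hT (by omega : q ≤ N) hBT'.2.1
    have t3 := restrict hT le_rfl hBT'.2.2.1
    have e1 := eq_of_card_zero r1 t1
    have e2 := eq_of_card_zero r2 t2
    have e3 := eq_of_card_zero r3 t3
    have f1 := eq_of_card_zero t1 r1
    have f2 := eq_of_card_zero t2 r2
    have f3 := eq_of_card_zero t3 r3
    rw [eq_comm (b := S.filter _)] at f1 f2 f3
    rw [← e1] at f1
    rw [← e2] at f2
    rw [← e3] at f3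
    simp only [SimpleGraph.boxProd_adj, SimpleGraph.comap_adj, cutEquiv, NG, Equiv.coe_fn_mk,
      Prod.mk.injEq, Subtype.mk.injEq, Function.Embedding.subtype_apply, SimpleGraph.induce]
    rw [c1, c2, ← e1, ← e2, ← e3]
    omega

/-! ### Boundary sets -/

lemma sdiff_one {S T : Finset (ℕ × ℕ)} {d e : ℕ × ℕ} (h : (S \ T).card = 1) (hd : d ∈ S)
    (hd' : d ∉ T) (he : e ∈ S) (hne : e ≠ d) : e ∈ T := by
  by_contra hc
  exact hne (Finset.card_le_one.1 h.le e (Finset.mem_sdiff.2 ⟨he, hc⟩) d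
    (Finset.mem_sdiff.2 ⟨hd, hd'⟩))

lemma bd_of_adj {N p q : ℕ} {S T : Finset (ℕ × ℕ)} (hp : 0 < p) (hpq : p < q) (hq : q < N)
    (hS : NTri 0 N S) (hT : NTri 0 N T) (s1 : Ed S 0 p) (s2 : Ed S p N) (t1 : Ed T 0 q)
    (t2 : Ed T q N) (h1 : (S \ T).card = 1) (h2 : (T \ S).card = 1) :
    Bd N p q (p, N) S ∧ Bd N p q (0, q) T := by
  have dS : (p, N) ∈ S := Ed_mem s2 (N := N) (by simp only [D]; omega)
  have dT : (0, q) ∈ T := Ed_mem t1 (N := N) (by simp only [D]; omega)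
  have hX : X (p, N) (0, q) := by simp only [X]; omega
  have dS' : (p, N) ∉ T := fun h => hT.2.1 _ h _ dT hX
  have dT' : (0, q) ∉ S := fun h => hS.2.1 _ dS _ h hX
  have st : ∀ {e}, e ∈ S → e ≠ (p, N) → e ∈ T := fun he hne => sdiff_one h1 dS dS' he hne
  have ts : ∀ {e}, e ∈ T → e ≠ (0, q) → e ∈ S := fun he hne => sdiff_one h2 dT dT' he hne
  have s3 : Ed S q N := by
    rcases t2 with h | h
    · exact Or.inl h
    · exact Or.inr (ts h (by rw [Ne, Prod.mk.injEq]; omega))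
  have t3 : Ed T 0 p := by
    rcases s1 with h | h
    · exact Or.inl h
    · exact Or.inr (st h (by rw [Ne, Prod.mk.injEq]; omega))
  have s4 : Ed S p q := by
    by_cases hc : q = p + 1
    · exact Or.inl hc
    · refine Or.inr (hS.2.2 _ (by simp only [D]; omega) ?_)
      intro f hf hXf
      have a1 := hS.2.1 f hf _ dS
      have a2 := not_X_of_Ed hS s3 hf
      have a3 := hS.1 f hf
      have a4 : f ≠ (p, N) := by
        rintro rfl
        simp only [X] at hXf; omega
      have a5 := hT.2.1 f (st hf a4) _ dT
      simp only [X, D] at *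
      omega
  have t4 : Ed T p q := by
    rcases s4 with h | h
    · exact Or.inl h
    · exact Or.inr (st h (by rw [Ne, Prod.mk.injEq]; omega))
  exact ⟨⟨s1, s4, s3, dS⟩, ⟨t3, t4, t2, dT⟩⟩

lemma exists_flip {N p q : ℕ} {d d' : ℕ × ℕ} {T : Finset (ℕ × ℕ)} (hp : 0 < p) (hpq : p < q)
    (hq : q < N) (hdd : (d = (p, N) ∧ d' = (0, q)) ∨ (d = (0, q) ∧ d' = (p, N)))
    (hT : NTri 0 N T) (hB : Bd N p q d T) :
    ∃ S, NTri 0 N S ∧ Bd N p q d' S ∧ (T \ S).card = 1 ∧ (S \ T).card = 1 := by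
  have hd : d = (p, N) ∨ d = (0, q) := by tauto
  have hd' : d' = (p, N) ∨ d' = (0, q) := by tauto
  have hX : X d d' := by
    rcases hdd with ⟨rfl, rfl⟩ | ⟨rfl, rfl⟩
    all_goals simp only [X]; omega
  have hS : NTri 0 N (Gl N p q d' (T.filter (D 0 p)) (T.filter (D p q)) (T.filter (D q N))) :=
    glue hp hpq hq hd' (restrict hT (by omega) hB.1) (restrict hT (by omega) hB.2.1)
      (restrict hT le_rfl hB.2.2.1)
  have hBS : Bd N p q d'
      (Gl N p q d' (T.filter (D 0 p)) (T.filter (D p q)) (T.filter (D q N))) :=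
    Ed_of_Gl hp hpq hq hd'
  refine ⟨_, hS, hBS, ?_, ?_⟩
  · rw [Finset.card_eq_one]
    refine ⟨d, ?_⟩
    ext e
    rw [Finset.mem_sdiff, Finset.mem_singleton]
    constructor
    · rintro ⟨h1, h2⟩
      rw [mem_Gl] at h2
      simp only [Finset.mem_filter] at h2
      have := mem_cls hp hpq hq hd hT hB h1
      have := hT.1 e h1
      tauto
    · rintro rfl
      exact ⟨hB.2.2.2, fun h => hS.2.1 _ h _ hBS.2.2.2 hX⟩
  · rw [Finset.card_eq_one]
    refine ⟨d', ?_⟩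
    ext e
    rw [Finset.mem_sdiff, Finset.mem_singleton]
    constructor
    · rintro ⟨h1, h2⟩
      rw [mem_Gl] at h1
      simp only [Finset.mem_filter] at h1
      have := quad_mem (e := e) hB
      tauto
    · rintro rfl
      exact ⟨hBS.2.2.2, fun h => hT.2.1 _ hB.2.2.2 _ h hX⟩

lemma boundary_iff (n p q : ℕ) (hp : 1 ≤ p) (hpq : p < q) (hqn : q ≤ n) (t : Triangulation n) :
    (t ∈ boundarySet n p q ↔
      trIso n 0 (n + 1) (by omega) t ∈ BdSet (n + 1) p q (p, n + 1)) ∧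
    (t ∈ boundarySet n q p ↔
      trIso n 0 (n + 1) (by omega) t ∈ BdSet (n + 1) p q (0, q)) := by
  have hq : q < n + 1 := by omega
  have hb : n + 1 = 0 + n + 1 := by omega
  have hT := (trEquiv n 0 (n + 1) hb t).2
  rw [trEquiv_val] at hT
  have hval : (trIso n 0 (n + 1) (by omega) t).val = t.val.image (phi 0) := rfl
  constructor
  · simp only [boundarySet, BdSet, Set.mem_setOf_eq, hval]
    rw [orientedClass_iff n p hp (by omega)]
    constructor
    · rintro ⟨⟨s1, s2⟩, s, hs, ha⟩
      rw [orientedClass_iff n q (by omega) hqn] at hs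
      rw [← trEquiv_adj n 0 (n + 1) hb] at ha
      have hS := (trEquiv n 0 (n + 1) hb s).2
      exact (bd_of_adj hp hpq hq hT hS s1 s2 hs.1 hs.2 ha.1 ha.2).1
    · intro hB
      obtain ⟨S, hS, hBS, c1, c2⟩ := exists_flip hp hpq hq (Or.inl ⟨rfl, rfl⟩) hT hB
      obtain ⟨s, hs⟩ := (trEquiv n 0 (n + 1) hb).surjective ⟨S, hS⟩
      have hs' : s.val.image (phi 0) = S := Subtype.ext_iff.1 hs
      refine ⟨⟨hB.1, Or.inr hB.2.2.2⟩, s, ?_, ?_⟩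
      · rw [orientedClass_iff n q (by omega) hqn, hs']
        exact ⟨Or.inr hBS.2.2.2, hBS.2.2.1⟩
      · rw [← trEquiv_adj n 0 (n + 1) hb, hs]
        exact ⟨c1, c2⟩
  · simp only [boundarySet, BdSet, Set.mem_setOf_eq, hval]
    rw [orientedClass_iff n q (by omega) hqn]
    constructor
    · rintro ⟨⟨s1, s2⟩, s, hs, ha⟩
      rw [orientedClass_iff n p hp (by omega)] at hs
      rw [← trEquiv_adj n 0 (n + 1) hb] at ha
      have hS := (trEquiv n 0 (n + 1) hb s).2
      exact (bd_of_adj hp hpq hq hS hT hs.1 hs.2 s1 s2 ha.2 ha.1).2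
    · intro hB
      obtain ⟨S, hS, hBS, c1, c2⟩ := exists_flip hp hpq hq (Or.inr ⟨rfl, rfl⟩) hT hB
      obtain ⟨s, hs⟩ := (trEquiv n 0 (n + 1) hb).surjective ⟨S, hS⟩
      have hs' : s.val.image (phi 0) = S := Subtype.ext_iff.1 hs
      refine ⟨⟨Or.inr hB.2.2.2, hB.2.2.1⟩, s, ?_, ?_⟩
      · rw [orientedClass_iff n p hp (by omega), hs']
        exact ⟨hBS.1, Or.inr hBS.2.2.2⟩
      · rw [← trEquiv_adj n 0 (n + 1) hb, hs]
        exact ⟨c1, c2⟩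

def induceCongr {V W : Type*} {G : SimpleGraph V} {H : SimpleGraph W} (f : G ≃g H) (s : Set V)
    (t : Set W) (h : ∀ v, v ∈ s ↔ f v ∈ t) : G.induce s ≃g H.induce t where
  toEquiv := f.toEquiv.subtypeEquiv h
  map_rel_iff' := f.map_rel_iff

lemma final (n p q : ℕ) (hp : 1 ≤ p) (hpq : p < q) (hqn : q ≤ n) (d : ℕ × ℕ)
    (hd : d = (p, n + 1) ∨ d = (0, q)) (s : Set (Triangulation n))
    (hs : ∀ t, t ∈ s ↔ trIso n 0 (n + 1) (by omega) t ∈ BdSet (n + 1) p q d) :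
    Nonempty (((assocGraph n).induce s) ≃g
      ((assocGraph (p - 1)).boxProd
        ((assocGraph (q - p - 1)).boxProd (assocGraph (n - q))))) :=
  ⟨((induceCongr (trIso n 0 (n + 1) (by omega)) s _ hs).trans
    (cutIso hp hpq (by omega) hd)).trans
    (boxCongr (trIso (p - 1) 0 p (by omega)) (boxCongr (trIso (q - p - 1) p q (by omega))
      (trIso (n - q) q (n + 1) (by omega)))).symm⟩

end AssocAux

/-- for every `n ≥ 2` and `1 ≤ p < q ≤ n`, the boundary set `∂_{p,q}`
(triangulations of `Θ_{T_p}` with a neighbor in `Θ_{T_q}`) induces a subgraph of `K_n`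
isomorphic to `K_{p-1} □ K_{q-p-1} □ K_{n-q}` (a product `K_i □ K_j □ K_k` with
`i + j + k = n - 2`), and symmetrically for `∂_{q,p} ⊆ Θ_{T_q}`. -/
theorem boundarySet_isomorphic_boxProd (n p q : ℕ) (hn : 2 ≤ n) (hp : 1 ≤ p)
    (hpq : p < q) (hqn : q ≤ n) :
    Nonempty (((assocGraph n).induce (boundarySet n p q)) ≃g
      ((assocGraph (p - 1)).boxProd
        ((assocGraph (q - p - 1)).boxProd (assocGraph (n - q))))) ∧
    Nonempty (((assocGraph n).induce (boundarySet n q p)) ≃g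
      ((assocGraph (p - 1)).boxProd
        ((assocGraph (q - p - 1)).boxProd (assocGraph (n - q))))) := by
  exact ⟨AssocAux.final n p q hp hpq hqn _ (Or.inl rfl) _
      fun t => (AssocAux.boundary_iff n p q hp hpq hqn t).1,
    AssocAux.final n p q hp hpq hqn _ (Or.inr rfl) _
      fun t => (AssocAux.boundary_iff n p q hp hpq hqn t).2⟩
end

section
/- For all natural numbers a, b, c, the Catalan numbers satisfy C_{a+b+1} · C_{b+c+1} ≤ C_b · C_{a+b+c+2}. -/
theorem catalan_rec_aux (n : ℕ) : (n + 2) * catalan (n + 1) = (4 * n + 2) * catalan n := by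
  have h1 := succ_mul_catalan_eq_centralBinom n
  have h2 := succ_mul_catalan_eq_centralBinom (n + 1)
  have h3 := Nat.succ_mul_centralBinom_succ n
  rw [← h1, ← h2] at h3
  apply Nat.eq_of_mul_eq_mul_left (Nat.succ_pos n)
  simp only [Nat.succ_eq_add_one]
  linarith

theorem catalan_logconvex_aux (b n : ℕ) (h : b ≤ n) (k : ℕ) :
    catalan (b + k) * catalan n ≤ catalan b * catalan (n + k) := by
  induction k with
  | zero => simp
  | succ k ih =>
    have e1 := catalan_rec_aux (b + k)
    have e2 := catalan_rec_aux (n + k)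
    rw [← add_assoc, ← add_assoc]
    have hpq : (n + k + 2) * (4 * (b + k) + 2) ≤ (b + k + 2) * (4 * (n + k) + 2) := by
      nlinarith
    have hm := Nat.mul_le_mul hpq ih
    have hpos : 0 < (b + k + 2) * (n + k + 2) := by positivity
    refine Nat.le_of_mul_le_mul_left ?_ hpos
    calc (b + k + 2) * (n + k + 2) * (catalan (b + k + 1) * catalan n)
        = (n + k + 2) * catalan n * ((b + k + 2) * catalan (b + k + 1)) := by ring
      _ = (n + k + 2) * (4 * (b + k) + 2) * (catalan (b + k) * catalan n) := by rw [e1]; ring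
      _ ≤ (b + k + 2) * (4 * (n + k) + 2) * (catalan b * catalan (n + k)) := hm
      _ = (b + k + 2) * catalan b * ((4 * (n + k) + 2) * catalan (n + k)) := by ring
      _ = (b + k + 2) * (n + k + 2) * (catalan b * catalan (n + k + 1)) := by rw [← e2]; ring

/-- For all natural numbers `a`, `b`, `c`, the Catalan numbers satisfy
`C_{a+b+1} · C_{b+c+1} ≤ C_b · C_{a+b+c+2}`. -/
theorem catalan_mul_catalan_le (a b c : ℕ) :
    catalan (a + b + 1) * catalan (b + c + 1) ≤ catalan b * catalan (a + b + c + 2) := by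
  have h := catalan_logconvex_aux b (b + c + 1) (by omega) (a + 1)
  rwa [show b + (a + 1) = a + b + 1 by ring,
    show b + c + 1 + (a + 1) = a + b + c + 2 by ring] at h
end

section
/- Let G_1, …, G_k (k ≥ 1) be finite graphs with nonempty vertex sets, and let h_1, …, h_k ≥ 0 be real numbers such that for each i and every nonempty S_i ⊆ V(G_i) with 2|S_i| ≤ |V(G_i)|, the number of edges of G_i with exactly one endpoint in S_i is at least h_i·|S_i|. Then for every nonempty S ⊆ V(G_1)×⋯×V(G_k) with 2|S| ≤ |V(G_1)|·…·|V(G_k)|, the number of edges of the Cartesian product G_1 □ G_2 □ ⋯ □ G_k with exactly one endpoint in S is at least (1/2)·(min_i h_i)·|S|. In other words, h(G_1□⋯□G_k) ≥ (1/2)·min_i h(G_i). -/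
/-- The Cartesian (box) product of a finite family of graphs: two tuples are adjacent
iff they agree in all but one coordinate, in which they are adjacent. For an indexed
family this agrees (up to the obvious isomorphism) with the associatively iterated
binary box product `G_1 □ ⋯ □ G_k`. -/
def piBoxProd {ι : Type*} {V : ι → Type*} (G : ∀ i, SimpleGraph (V i)) :
    SimpleGraph (∀ i, V i) where
  Adj x y := ∃ i, (G i).Adj (x i) (y i) ∧ ∀ j, j ≠ i → x j = y j
  symm := by
    constructor
    rintro x y ⟨i, ha, he⟩
    exact ⟨i, ha.symm, fun j hj => (he j hj).symm⟩
  loopless := by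
    constructor
    rintro x ⟨i, ha, -⟩
    exact (G i).loopless.irrefl _ ha


section Aux
open Finset Function

variable {ι : Type*} [Fintype ι] [DecidableEq ι] {V : ι → Type*} [∀ i, Fintype (V i)]
  [∀ i, Nonempty (V i)]

/-- Averaging over coordinate `i`. -/
noncomputable def avg (i : ι) (f : (∀ i, V i) → ℝ) : (∀ i, V i) → ℝ :=
  fun x => (∑ a, f (update x i a)) / Fintype.card (V i)

/-- Averaging over a list of coordinates. -/
noncomputable def avgL : List ι → ((∀ i, V i) → ℝ) → ((∀ i, V i) → ℝ)
  | [], f => f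
  | i :: l, f => avg i (avgL l f)

lemma card_pos_real (i : ι) : (0 : ℝ) < Fintype.card (V i) := by
  exact_mod_cast Fintype.card_pos

lemma sum_avg (i : ι) (f : (∀ i, V i) → ℝ) : ∑ x, avg i f x = ∑ x, f x := by
  unfold avg
  rw [← Finset.sum_div, div_eq_iff (card_pos_real i).ne']
  have e : ∑ p : (∀ i, V i) × V i, f (update p.1 i p.2) = ∑ p : (∀ i, V i) × V i, f p.1 := by
    refine Finset.sum_bij' (fun p _ => (update p.1 i p.2, p.1 i))
      (fun p _ => (update p.1 i p.2, p.1 i)) ?_ ?_ ?_ ?_ ?_ <;> simp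
  rw [Fintype.sum_prod_type, Fintype.sum_prod_type] at e
  rw [e]
  simp [Finset.mul_sum, mul_comm]

lemma avg_update (i : ι) (f : (∀ i, V i) → ℝ) (x : ∀ i, V i) (a : V i) :
    avg i f (update x i a) = avg i f x := by
  simp [avg]

lemma sum_mul_avg (i : ι) (f : (∀ i, V i) → ℝ) :
    ∑ x, f x * avg i f x = ∑ x, (avg i f x) ^ 2 := by
  rw [← sum_avg i (fun x => f x * avg i f x)]
  refine Finset.sum_congr rfl fun x _ => ?_
  change (∑ a, f (update x i a) * avg i f (update x i a)) / (Fintype.card (V i) : ℝ) = _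
  simp only [avg_update]
  rw [← Finset.sum_mul, sq, mul_div_right_comm]
  rfl

/-- Dirichlet-type energy in direction `i`. -/
lemma energy_eq (i : ι) (f : (∀ i, V i) → ℝ) :
    ∑ x, (f x - avg i f x) ^ 2 = ∑ x, f x ^ 2 - ∑ x, avg i f x ^ 2 := by
  have := sum_mul_avg i f
  have e : ∀ x, (f x - avg i f x) ^ 2 = f x ^ 2 - 2 * (f x * avg i f x) + avg i f x ^ 2 :=
    fun x => by ring
  simp only [e, Finset.sum_add_distrib, Finset.sum_sub_distrib, ← Finset.mul_sum]
  linarith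

lemma sum_avg_sq_le (i : ι) (f : (∀ i, V i) → ℝ) :
    ∑ x, avg i f x ^ 2 ≤ ∑ x, f x ^ 2 := by
  have := energy_eq i f
  have h2 : 0 ≤ ∑ x, (f x - avg i f x) ^ 2 := Finset.sum_nonneg fun x _ => sq_nonneg _
  linarith

lemma avg_comm (i j : ι) (f : (∀ i, V i) → ℝ) : avg i (avg j f) = avg j (avg i f) := by
  by_cases hij : i = j
  · subst hij; rfl
  funext x
  unfold avg
  simp only [← Finset.sum_div]
  rw [Finset.sum_comm, div_right_comm]
  simp only [update_comm hij]

lemma avg_sub (i : ι) (f g : (∀ i, V i) → ℝ) (x : ∀ i, V i) :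
    avg i (fun y => f y - g y) x = avg i f x - avg i g x := by
  simp [avg, Finset.sum_sub_distrib, sub_div]

lemma energy_avg_le (i j : ι) (f : (∀ i, V i) → ℝ) :
    ∑ x, (avg j f x - avg i (avg j f) x) ^ 2 ≤ ∑ x, (f x - avg i f x) ^ 2 := by
  have := sum_avg_sq_le j (fun y => f y - avg i f y)
  simp only [avg_sub] at this
  rwa [avg_comm i j]

lemma energy_avgL_le (i : ι) (l : List ι) (f : (∀ i, V i) → ℝ) :
    ∑ x, (avgL l f x - avg i (avgL l f) x) ^ 2 ≤ ∑ x, (f x - avg i f x) ^ 2 := by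
  induction l with
  | nil => exact le_rfl
  | cons j l ih => exact (energy_avg_le i j _).trans ih

lemma efron_stein (l : List ι) (f : (∀ i, V i) → ℝ) :
    ∑ x, f x ^ 2 - ∑ x, avgL l f x ^ 2 ≤
      (l.map fun i => ∑ x, f x ^ 2 - ∑ x, avg i f x ^ 2).sum := by
  induction l with
  | nil => simp [avgL]
  | cons i l ih =>
    have h1 := energy_avgL_le i l f
    rw [energy_eq, energy_eq] at h1
    simp only [List.map_cons, List.sum_cons, avgL]
    linarith

lemma sum_avgL (l : List ι) (f : (∀ i, V i) → ℝ) : ∑ x, avgL l f x = ∑ x, f x := by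
  induction l with
  | nil => rfl
  | cons i l ih => rw [avgL, sum_avg, ih]

lemma avgL_congr (l : List ι) (f : (∀ i, V i) → ℝ) :
    ∀ x y : ∀ i, V i, (∀ i, i ∉ l → x i = y i) → avgL l f x = avgL l f y := by
  induction l with
  | nil =>
    intro x y hxy
    rw [show x = y from funext fun i => hxy i (by simp)]
  | cons i l ih =>
    intro x y hxy
    simp only [avgL, avg]
    congr 1
    refine Finset.sum_congr rfl fun a _ => ih _ _ fun j hj => ?_
    by_cases hji : j = i
    · subst hji; simp
    · simp [hji, hxy j (by simp [hji, hj])]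

lemma var_le (f : (∀ i, V i) → ℝ) :
    ∑ x, f x ^ 2 - (∑ x, f x) ^ 2 / Fintype.card (∀ i, V i) ≤
      ∑ i, (∑ x, f x ^ 2 - ∑ x, avg i f x ^ 2) := by
  have h := efron_stein (Finset.univ : Finset ι).toList f
  rw [Finset.sum_map_toList] at h
  have hN : (0 : ℝ) < Fintype.card (∀ i, V i) := by exact_mod_cast Fintype.card_pos
  obtain ⟨x0⟩ : Nonempty (∀ i, V i) := inferInstance
  set g := avgL (Finset.univ : Finset ι).toList f with hg
  have hc : ∀ x, g x = g x0 := fun x => avgL_congr _ _ _ _ (by simp)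
  have hs : ∑ x, g x = ∑ x, f x := sum_avgL _ _
  have h1 : Fintype.card (∀ i, V i) * g x0 = ∑ x, f x := by
    rw [← hs]; simp only [hc]; simp
  have h2 : ∑ x, g x ^ 2 = (∑ x, f x) ^ 2 / Fintype.card (∀ i, V i) := by
    rw [← h1]; simp only [hc]; simp; field_simp
  rw [← h2]; exact h

end Aux

section Bd
open Finset Function Classical

lemma edgeBoundary_compl {V : Type*} (G : SimpleGraph V) (S : Set V) :
    edgeBoundary G Sᶜ = edgeBoundary G S := by
  ext e
  constructor
  · rintro ⟨he, u, v, rfl, hu, hv⟩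
    exact ⟨he, v, u, Sym2.eq_swap, by simpa using hv, hu⟩
  · rintro ⟨he, u, v, rfl, hu, hv⟩
    exact ⟨he, v, u, Sym2.eq_swap, hv, by simpa using hu⟩

lemma edgeBoundary_ncard {V : Type*} [Fintype V] (G : SimpleGraph V) (S : Set V) :
    (edgeBoundary G S).ncard = #{p : V × V | p.1 ∈ S ∧ p.2 ∉ S ∧ G.Adj p.1 p.2} := by
  rw [← Set.ncard_coe_finset]
  symm
  refine Set.ncard_congr (fun p _ => s(p.1, p.2)) ?_ ?_ ?_
  · rintro ⟨u, v⟩ hp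
    simp only [coe_filter, Finset.mem_univ, true_and, Set.mem_setOf_eq] at hp
    exact ⟨hp.2.2, u, v, rfl, hp.1, hp.2.1⟩
  · rintro ⟨u, v⟩ ⟨u', v'⟩ hp hp' he
    simp only [coe_filter, Finset.mem_univ, true_and, Set.mem_setOf_eq] at hp hp'
    simp only [Sym2.eq_iff] at he
    rcases he with ⟨rfl, rfl⟩ | ⟨rfl, rfl⟩
    · rfl
    · exact absurd hp.1 hp'.2.1
  · rintro e ⟨he, u, v, rfl, hu, hv⟩
    exact ⟨(u, v), by simpa using ⟨hu, hv, he⟩, rfl⟩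

lemma fiber_bound {V : Type*} [Fintype V] [Nonempty V] (G : SimpleGraph V) (h : ℝ) (hh : 0 ≤ h)
    (hexp : ∀ S : Set V, S.Nonempty → 2 * S.ncard ≤ Fintype.card V →
      h * (S.ncard : ℝ) ≤ ((edgeBoundary G S).ncard : ℝ)) (T : Set V) :
    h * (T.ncard * (1 - T.ncard / Fintype.card V)) ≤ ((edgeBoundary G T).ncard : ℝ) := by
  have key : ∀ T : Set V, 2 * T.ncard ≤ Fintype.card V →
      h * (T.ncard : ℝ) ≤ ((edgeBoundary G T).ncard : ℝ) := by
    intro T hT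
    rcases T.eq_empty_or_nonempty with rfl | hne
    · simp
    · exact hexp T hne hT
  have hn : (0 : ℝ) < Fintype.card V := by exact_mod_cast Fintype.card_pos
  have hc : T.ncard + Tᶜ.ncard = Fintype.card V := by
    rw [Set.ncard_add_ncard_compl, Nat.card_eq_fintype_card]
  have hcr : (T.ncard : ℝ) + Tᶜ.ncard = Fintype.card V := by exact_mod_cast hc
  have h1 : 1 - (T.ncard : ℝ) / Fintype.card V = Tᶜ.ncard / Fintype.card V := by
    field_simp; linarith
  have ht : (0 : ℝ) ≤ T.ncard := by positivity
  have htc : (0 : ℝ) ≤ Tᶜ.ncard := by positivity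
  rw [h1]
  by_cases hT : 2 * T.ncard ≤ Fintype.card V
  · refine le_trans (mul_le_mul_of_nonneg_left ?_ hh) (key T hT)
    refine mul_le_of_le_one_right ht ?_
    rw [div_le_one hn]; linarith
  · rw [← edgeBoundary_compl]
    refine le_trans (mul_le_mul_of_nonneg_left ?_ hh) (key Tᶜ (by omega))
    rw [mul_div_assoc', mul_comm, mul_div_assoc]
    refine mul_le_of_le_one_right htc ?_
    rw [div_le_one hn]; linarith

variable {ι : Type*} [Fintype ι] [DecidableEq ι] {V : ι → Type*} [∀ i, Fintype (V i)]
  [∀ i, Nonempty (V i)]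

lemma boundary_ge (G : ∀ i, SimpleGraph (V i)) (S : Set (∀ i, V i)) :
    ∑ i, ∑ x : (∀ i, V i), #{a : V i | x ∈ S ∧ update x i a ∉ S ∧ (G i).Adj (x i) a} ≤
      (edgeBoundary (piBoxProd G) S).ncard := by
  rw [edgeBoundary_ncard]
  simp only [← Finset.card_sigma]
  refine Finset.card_le_card_of_injOn (fun q => (q.2.1, update q.2.1 q.1 q.2.2)) ?_ ?_
  · rintro ⟨i, x, a⟩ hq
    simp only [coe_sigma, Set.mem_sigma_iff, coe_filter, Finset.mem_univ, true_and,
      Set.mem_setOf_eq, Finset.coe_univ, Set.mem_univ] at hq ⊢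
    refine ⟨hq.1, hq.2.1, i, by simpa using hq.2.2, fun j hj => by simp [hj]⟩
  · rintro ⟨i, x, a⟩ hq ⟨j, y, b⟩ hq' he
    simp only [coe_sigma, Set.mem_sigma_iff, coe_filter, Finset.mem_univ, true_and,
      Set.mem_setOf_eq, Finset.coe_univ, Set.mem_univ] at hq hq'
    simp only [Prod.mk.injEq] at he
    obtain ⟨rfl, he⟩ := he
    have hij : i = j := by
      by_contra hne
      have := congrFun he i
      simp [hne] at this
      exact (hq.2.2.ne this.symm)
    subst hij
    have := congrFun he i
    simp at this
    subst this
    rfl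

lemma dir_bound (G : ∀ i, SimpleGraph (V i)) (S : Set (∀ i, V i)) (i : ι) (h : ℝ) (hh : 0 ≤ h)
    (hexp : ∀ S : Set (V i), S.Nonempty → 2 * S.ncard ≤ Fintype.card (V i) →
      h * (S.ncard : ℝ) ≤ ((edgeBoundary (G i) S).ncard : ℝ)) :
    h * (∑ x, (S.indicator 1 x : ℝ) ^ 2 - ∑ x, avg i (S.indicator 1) x ^ 2) ≤
      ∑ x : (∀ i, V i), (#{a : V i | x ∈ S ∧ update x i a ∉ S ∧ (G i).Adj (x i) a} : ℝ) := by
  have hsq : ∀ x, (S.indicator 1 x : ℝ) ^ 2 = S.indicator 1 x := by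
    intro x; by_cases hx : x ∈ S <;> simp [hx]
  simp only [hsq]
  rw [← sum_avg i (S.indicator 1), ← sum_avg i (fun x : (∀ i, V i) =>
    (#{a : V i | x ∈ S ∧ update x i a ∉ S ∧ (G i).Adj (x i) a} : ℝ)),
    ← Finset.sum_sub_distrib, Finset.mul_sum]
  refine Finset.sum_le_sum fun x _ => ?_
  set T : Set (V i) := {a | update x i a ∈ S} with hT
  have hb := fiber_bound (G i) h hh hexp T
  have hn : (0 : ℝ) < Fintype.card (V i) := card_pos_real i
  have hp : avg i (S.indicator 1) x = T.ncard / Fintype.card (V i) := by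
    unfold avg
    congr 1
    rw [Set.ncard_eq_toFinset_card']
    simp [Set.indicator_apply, hT]
  have hB : avg i (fun x : (∀ i, V i) =>
      (#{a : V i | x ∈ S ∧ update x i a ∉ S ∧ (G i).Adj (x i) a} : ℝ)) x =
      (edgeBoundary (G i) T).ncard / Fintype.card (V i) := by
    unfold avg
    congr 1
    rw [edgeBoundary_ncard]
    simp only [Finset.card_filter, Fintype.sum_prod_type]
    push_cast
    simp [hT]
  rw [hp, hB, le_div_iff₀ hn]
  refine le_trans (le_of_eq ?_) hb
  field_simp

end Bd

/-- if each finite nonempty graph `G i` has edge expansion at least `h i ≥ 0`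
(every nonempty `S_i` with `2|S_i| ≤ |V(G_i)|` has `|∂S_i| ≥ h_i·|S_i|`), then the
Cartesian product `G_1 □ ⋯ □ G_k` has edge expansion at least `(1/2)·min_i h_i`. -/
theorem boxProd_expansion {k : ℕ} (hk : 1 ≤ k) (V : Fin k → Type*)
    [∀ i, Fintype (V i)] [∀ i, Nonempty (V i)]
    (G : ∀ i, SimpleGraph (V i)) (h : Fin k → ℝ) (hnn : ∀ i, 0 ≤ h i)
    (hexp : ∀ i, ∀ S : Set (V i), S.Nonempty → 2 * S.ncard ≤ Fintype.card (V i) →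
      h i * (S.ncard : ℝ) ≤ ((edgeBoundary (G i) S).ncard : ℝ))
    (S : Set (∀ i, V i)) (hS : S.Nonempty)
    (hhalf : 2 * S.ncard ≤ Fintype.card (∀ i, V i)) :
    (1 / 2 : ℝ) *
        (Finset.univ.inf' (Finset.univ_nonempty_iff.mpr ⟨⟨0, hk⟩⟩) h) *
        (S.ncard : ℝ) ≤
      ((edgeBoundary (piBoxProd G) S).ncard : ℝ) := by
  classical
  set m := Finset.univ.inf' (Finset.univ_nonempty_iff.mpr ⟨⟨0, hk⟩⟩) h with hm
  have hmi : ∀ i, m ≤ h i := fun i => Finset.inf'_le _ (Finset.mem_univ i)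
  have hm0 : 0 ≤ m := by
    rw [hm]; exact Finset.le_inf' _ _ fun i _ => hnn i
  have h1 := boundary_ge G S
  have h1' : (∑ i, ∑ x : (∀ i, V i), ((Finset.univ.filter fun a : V i =>
      x ∈ S ∧ Function.update x i a ∉ S ∧ (G i).Adj (x i) a).card : ℝ)) ≤
      ((edgeBoundary (piBoxProd G) S).ncard : ℝ) := by
    refine le_trans (le_of_eq ?_) (Nat.cast_le.mpr h1)
    push_cast
    congr!
  refine le_trans ?_ h1'
  have h2 : ∀ i, m * (∑ x, (S.indicator 1 x : ℝ) ^ 2 - ∑ x, avg i (S.indicator 1) x ^ 2) ≤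
      ∑ x : (∀ i, V i), ((Finset.univ.filter fun a : V i =>
      x ∈ S ∧ Function.update x i a ∉ S ∧ (G i).Adj (x i) a).card : ℝ) := by
    intro i
    refine le_trans ?_ (le_trans (dir_bound G S i (h i) (hnn i) (hexp i)) (le_of_eq ?_))
    · refine mul_le_mul_of_nonneg_right (hmi i) ?_
      linarith [sum_avg_sq_le i (S.indicator (1 : (∀ i, V i) → ℝ))]
    · congr!
  refine le_trans ?_ (Finset.sum_le_sum fun i _ => h2 i)
  rw [← Finset.mul_sum]
  refine le_trans ?_ (mul_le_mul_of_nonneg_left (var_le (S.indicator (1 : (∀ i, V i) → ℝ))) hm0)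
  have hsq : ∀ x, (S.indicator 1 x : ℝ) ^ 2 = S.indicator 1 x := by
    intro x; by_cases hx : x ∈ S <;> simp [hx]
  have hsum : ∑ x, (S.indicator 1 x : ℝ) = S.ncard := by
    rw [Set.ncard_eq_toFinset_card']
    simp [Set.indicator_apply]
  simp only [hsq]
  rw [hsum, mul_comm (1 / 2 : ℝ), mul_assoc]
  refine mul_le_mul_of_nonneg_left ?_ hm0
  have hN : (0 : ℝ) < Fintype.card (∀ i, V i) := by exact_mod_cast Fintype.card_pos
  have hh : (2 : ℝ) * S.ncard ≤ Fintype.card (∀ i, V i) := by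
    refine le_trans ?_ (le_trans (Nat.cast_le.mpr hhalf) (le_of_eq ?_))
    · push_cast; exact le_rfl
    · congr!
  have h3 : (S.ncard : ℝ) ^ 2 / Fintype.card (∀ i, V i) ≤ 1 / 2 * S.ncard := by
    rw [div_le_iff₀ hN]
    nlinarith [(Nat.cast_nonneg S.ncard : (0 : ℝ) ≤ S.ncard)]
  linarith
end

section
/- Let G and H be finite connected graphs admitting uniform multicommodity flows g and h, respectively, each with congestion at most ρ. Then the Cartesian product G □ H admits a uniform multicommodity flow with congestion at most ρ. -/
open Classical

/-- A multicommodity flow in a (di)graph with allowed arcs `Allowed` and demands `D`: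
for every ordered pair `(z, w)` of vertices, `f z w` is a nonnegative flow on arcs,
supported on allowed arcs, routing `D z w` units from `z` to `w` (net outflow `D z w`
at `z`, net inflow `D z w` at `w`, conservation elsewhere). -/
def IsMCFlow {V : Type*} [Fintype V] (Allowed : V → V → Prop) (D : V → V → ℝ)
    (f : V → V → V → V → ℝ) : Prop :=
  (∀ z w x y, 0 ≤ f z w x y) ∧
  (∀ z w x y, f z w x y ≠ 0 → Allowed x y) ∧
  (∀ z w v, ((∑ y, f z w v y) - ∑ y, f z w y v) =
      (if v = z then D z w else 0) - (if v = w then D z w else 0))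

/-- if finite connected graphs `G` and `H` admit uniform multicommodity
flows (one unit between every ordered pair of vertices) with congestion at most `ρ`,
then the Cartesian product `G □ H` admits a uniform multicommodity flow with
congestion at most `ρ` (congestion of a flow: the maximum over arcs of the total flow
across the arc divided by the number of vertices). -/
theorem boxProd_uniform_flow {V W : Type*} [Fintype V] [Fintype W]
    (G : SimpleGraph V) (H : SimpleGraph W) (hG : G.Connected) (hH : H.Connected)
    (ρ : ℝ)
    (g : V → V → V → V → ℝ)
    (hg : IsMCFlow G.Adj (fun _ _ => 1) g)
    (hgcong : ∀ x y : V, G.Adj x y →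
      (∑ s, ∑ t, g s t x y) / (Fintype.card V : ℝ) ≤ ρ)
    (f : W → W → W → W → ℝ)
    (hf : IsMCFlow H.Adj (fun _ _ => 1) f)
    (hfcong : ∀ x y : W, H.Adj x y →
      (∑ s, ∑ t, f s t x y) / (Fintype.card W : ℝ) ≤ ρ) :
    ∃ F : V × W → V × W → V × W → V × W → ℝ,
      IsMCFlow (G.boxProd H).Adj (fun _ _ => 1) F ∧
      ∀ x y : V × W, (G.boxProd H).Adj x y →
        (∑ s, ∑ t, F s t x y) / (Fintype.card (V × W) : ℝ) ≤ ρ := by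
  obtain ⟨g0, g1, g2⟩ := hg
  obtain ⟨f0, f1, f2⟩ := hf
  have hV : (0 : ℝ) < Fintype.card V := by
    haveI := hG.nonempty
    exact_mod_cast Fintype.card_pos
  have hW : (0 : ℝ) < Fintype.card W := by
    haveI := hH.nonempty
    exact_mod_cast Fintype.card_pos
  refine ⟨fun s t x y => (if x.2 = y.2 then (if x.2 = s.2 then g s.1 t.1 x.1 y.1 else 0) else 0) +
    (if x.1 = y.1 then (if x.1 = t.1 then f s.2 t.2 x.2 y.2 else 0) else 0), ⟨?_, ?_, ?_⟩, ?_⟩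
  · intro z w x y
    have := g0 z.1 w.1 x.1 y.1
    have := f0 z.2 w.2 x.2 y.2
    dsimp only
    split_ifs <;> linarith
  · intro z w x y h
    rw [SimpleGraph.boxProd_adj]
    by_contra hc
    push Not at hc
    apply h
    have a : x.2 = y.2 → g z.1 w.1 x.1 y.1 = 0 := by
      intro e
      by_contra h'
      exact hc.1 (g1 _ _ _ _ h') e
    have b : x.1 = y.1 → f z.2 w.2 x.2 y.2 = 0 := by
      intro e
      by_contra h'
      exact hc.2 (f1 _ _ _ _ h') e
    dsimp only
    split_ifs <;> simp_all
  · rintro ⟨z1, z2⟩ ⟨w1, w2⟩ ⟨v1, v2⟩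
    have a := g2 z1 w1 v1
    have b := f2 z2 w2 v2
    have e1 : (∑ y : V × W, ((if v2 = y.2 then (if v2 = z2 then g z1 w1 v1 y.1 else 0) else 0) +
        (if v1 = y.1 then (if v1 = w1 then f z2 w2 v2 y.2 else 0) else 0)))
        = (if v2 = z2 then ∑ y, g z1 w1 v1 y else 0)
          + (if v1 = w1 then ∑ y, f z2 w2 v2 y else 0) := by
      rw [Finset.sum_add_distrib, Fintype.sum_prod_type, Fintype.sum_prod_type_right]
      congr 1
      · simp only [Finset.sum_ite_eq, Finset.mem_univ, if_true]
        split_ifs <;> simp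
      · simp only [Finset.sum_ite_eq, Finset.mem_univ, if_true]
        split_ifs <;> simp
    have e2 : (∑ y : V × W, ((if y.2 = v2 then (if y.2 = z2 then g z1 w1 y.1 v1 else 0) else 0) +
        (if y.1 = v1 then (if y.1 = w1 then f z2 w2 y.2 v2 else 0) else 0)))
        = (if v2 = z2 then ∑ y, g z1 w1 y v1 else 0)
          + (if v1 = w1 then ∑ y, f z2 w2 y v2 else 0) := by
      rw [Finset.sum_add_distrib, Fintype.sum_prod_type, Fintype.sum_prod_type_right]
      congr 1
      · simp only [Finset.sum_ite_eq', Finset.mem_univ, if_true]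
        split_ifs <;> simp
      · simp only [Finset.sum_ite_eq', Finset.mem_univ, if_true]
        split_ifs <;> simp
    dsimp only
    rw [e1, e2]
    simp only [Prod.mk.injEq]
    by_cases p1 : v1 = z1 <;> by_cases p2 : v2 = z2 <;> by_cases q1 : v1 = w1 <;>
      by_cases q2 : v2 = w2 <;>
      simp only [p1, p2, q1, q2, if_true, if_false, and_true, and_false, true_and] at a b ⊢ <;>
      grind
  · rintro ⟨x1, x2⟩ ⟨y1, y2⟩ h
    rw [SimpleGraph.boxProd_adj] at h
    simp only [Fintype.card_prod, Nat.cast_mul]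
    rcases h with ⟨h, e⟩ | ⟨h, e⟩
    · dsimp only at h e
      subst e
      have c := hgcong _ _ h
      have k : (∑ s : V × W, ∑ t : V × W,
          (if x2 = s.2 then g s.1 t.1 x1 y1 else 0)) =
          Fintype.card W * ∑ s, ∑ t, g s t x1 y1 := by
        simp only [Fintype.sum_prod_type]
        rw [Finset.mul_sum]
        refine Finset.sum_congr rfl fun s _ => ?_
        rw [Finset.sum_eq_single x2]
        · simp [Finset.mul_sum]
        · intro b _ hb
          simp [Ne.symm hb]
        · simp
      simp only [h.ne, if_true, if_false, add_zero]
      rw [k, mul_comm, mul_div_mul_right _ _ hW.ne']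
      exact c
    · dsimp only at h e
      subst e
      have c := hfcong _ _ h
      have k : (∑ s : V × W, ∑ t : V × W,
          (if x1 = t.1 then f s.2 t.2 x2 y2 else 0)) =
          Fintype.card V * ∑ s, ∑ t, f s t x2 y2 := by
        simp only [Fintype.sum_prod_type]
        rw [Finset.sum_const, Finset.card_univ, nsmul_eq_mul]
        congr 1
        refine Finset.sum_congr rfl fun s _ => ?_
        rw [Finset.sum_eq_single x1]
        · simp
        · intro b _ hb
          simp [Ne.symm hb]
        · simp
      simp only [h.ne, if_true, if_false, zero_add]
      rw [k, mul_div_mul_left _ _ hV.ne']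
      exact c
end

section
/- For all integers k ≥ 3 and n ≥ 1, the generalized Catalan number C_{k,n} = (1/((k−2)n+1))·binom((k−1)n, n) satisfies e^{−1/6}·((k−2)/(k−1))·f(k,n) ≤ C_{k,n} ≤ e^{1/12}·f(k,n), where f(k,n) = (√(k−1) / (√(2π)·((k−2)n)^{3/2})) · ((k−1)^{(k−1)n} / (k−2)^{(k−2)n}). -/
/-- The generalized Catalan number `C_{k,n} = (1/((k-2)n+1))·binom((k-1)n, n)`,
which counts the `k`-angulations of the convex `((k-2)n+2)`-gon (the natural-number
division is exact). -/
def genCatalan (k n : ℕ) : ℕ :=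
  Nat.choose ((k - 1) * n) n / ((k - 2) * n + 1)

/-- The Stirling-type approximation
`f(k,n) = (√(k-1) / (√(2π)·((k-2)n)^{3/2})) · ((k-1)^{(k-1)n} / (k-2)^{(k-2)n})`. -/
noncomputable def genCatalanApprox (k n : ℕ) : ℝ :=
  (Real.sqrt ((k : ℝ) - 1) /
      (Real.sqrt (2 * Real.pi) * (((k : ℝ) - 2) * (n : ℝ)) ^ (3 / 2 : ℝ))) *
    (((k : ℝ) - 1) ^ ((k - 1) * n) / ((k : ℝ) - 2) ^ ((k - 2) * n))

open Stirling in
lemma gc_fact (n : ℕ) (hn : 1 ≤ n) :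
    (n.factorial : ℝ) = stirlingSeq n * (Real.sqrt 2 * Real.sqrt n * ((n : ℝ) ^ n / Real.exp n)) := by
  have h0 : (0 : ℝ) < n := by exact_mod_cast hn
  have hs := Real.sqrt_pos.mpr h0
  have hp := pow_pos h0 n
  unfold stirlingSeq
  rw [div_pow, ← Real.exp_nat_mul, mul_one, Real.sqrt_mul (by norm_num)]
  field_simp

lemma gc_exact (m n : ℕ) (hn : 1 ≤ n) : (m * n + 1) ∣ Nat.choose ((m + 1) * n) n := by
  obtain ⟨j, rfl⟩ : ∃ j, n = j + 1 := ⟨n - 1, by omega⟩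
  have h := Nat.choose_succ_right_eq ((m + 1) * (j + 1)) j
  have h2 : (m + 1) * (j + 1) - j = m * (j + 1) + 1 := by
    have : (m + 1) * (j + 1) = m * (j + 1) + 1 + j := by ring
    omega
  rw [h2] at h
  have hc : Nat.Coprime (m * (j + 1) + 1) (j + 1) := by simp
  exact hc.dvd_of_dvd_mul_right (h ▸ Dvd.intro_left _ rfl)

open Stirling in
lemma gc_le_one (n : ℕ) (hn : 1 ≤ n) :
    stirlingSeq n ≤ Real.sqrt Real.pi * Real.exp (1 / 12) := by
  have h1 : stirlingSeq n ≤ stirlingSeq 1 := by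
    obtain ⟨j, rfl⟩ : ∃ j, n = j + 1 := ⟨n - 1, by omega⟩
    exact stirlingSeq'_antitone (Nat.zero_le j)
  refine h1.trans ?_
  rw [stirlingSeq_one, div_le_iff₀ (by positivity)]
  have h6 : Real.exp (11 / 6) ≤ 6.28 := by
    refine le_of_pow_le_pow_left₀ (n := 6) (by norm_num) (by norm_num) ?_
    rw [← Real.exp_nat_mul]
    have : ((6 : ℕ) : ℝ) * (11 / 6) = ((11 : ℕ) : ℝ) * 1 := by norm_num
    rw [this, Real.exp_nat_mul]
    calc Real.exp 1 ^ 11 ≤ (2.72 : ℝ) ^ 11 := by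
          have := Real.exp_one_lt_d9
          gcongr
          linarith
      _ ≤ 6.28 ^ 6 := by norm_num
  have h7 : Real.exp (11 / 12) ≤ Real.sqrt Real.pi * Real.sqrt 2 := by
    rw [← Real.sqrt_mul Real.pi_pos.le]
    apply Real.le_sqrt_of_sq_le
    rw [← Real.exp_nat_mul]
    have : ((2 : ℕ) : ℝ) * (11 / 12) = 11 / 6 := by norm_num
    rw [this]
    have := Real.pi_gt_d2
    linarith
  have h8 : Real.exp 1 = Real.exp (11 / 12) * Real.exp (1 / 12) := by
    rw [← Real.exp_add]; norm_num
  rw [h8]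
  calc _ ≤ (Real.sqrt Real.pi * Real.sqrt 2) * Real.exp (1 / 12) := by gcongr
    _ = _ := by ring

open Stirling in
lemma gc_main (m n : ℕ) (hm : 1 ≤ m) (hn : 1 ≤ n) :
    (genCatalan (m + 2) n : ℝ) =
      (Real.sqrt Real.pi * stirlingSeq ((m + 1) * n) / (stirlingSeq n * stirlingSeq (m * n))) *
        ((m * n : ℝ) / (m * n + 1)) * genCatalanApprox (m + 2) n := by
  have hm0 : (0 : ℝ) < m := by exact_mod_cast hm
  have hn0 : (0 : ℝ) < n := by exact_mod_cast hn
  have hM : 1 ≤ m * n := Nat.mul_pos hm hn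
  have hN : 1 ≤ (m + 1) * n := Nat.mul_pos (by omega) hn
  have pos : ∀ j : ℕ, 1 ≤ j → 0 < stirlingSeq j := fun j hj => by
    obtain ⟨i, rfl⟩ : ∃ i, j = i + 1 := ⟨j - 1, by omega⟩
    exact stirlingSeq'_pos i
  have p1 := pos n hn
  have p2 := pos _ hM
  have hd := gc_exact m n hn
  have hch : (Nat.choose ((m + 1) * n) n : ℝ) =
      ((m + 1) * n).factorial / (n.factorial * (m * n).factorial) := by
    rw [Nat.cast_choose ℝ (by nlinarith)]
    have : (m + 1) * n - n = m * n := by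
      have : (m + 1) * n = m * n + n := by ring
      omega
    rw [this]
  unfold genCatalan genCatalanApprox
  have e1 : m + 2 - 1 = m + 1 := rfl
  have e2 : m + 2 - 2 = m := rfl
  rw [e1, e2, Nat.cast_div hd (by positivity), hch, gc_fact _ hN, gc_fact _ hn, gc_fact _ hM]
  have c1 : ((m + 2 : ℕ) : ℝ) - 1 = m + 1 := by push_cast; ring
  have c2 : ((m + 2 : ℕ) : ℝ) - 2 = m := by push_cast; ring
  rw [c1, c2]
  have e3 : ((m : ℝ) * n) ^ (3 / 2 : ℝ) = (m * n) * (Real.sqrt m * Real.sqrt n) := by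
    rw [show (3 / 2 : ℝ) = 1 + 1 / 2 by norm_num, Real.rpow_add (by positivity), Real.rpow_one,
      ← Real.sqrt_eq_rpow, Real.sqrt_mul hm0.le]
  rw [e3]
  push_cast
  have e4 : Real.exp (((m : ℝ) + 1) * n) = Real.exp n * Real.exp (m * n) := by
    rw [← Real.exp_add]; ring_nf
  rw [e4, Real.sqrt_mul (by positivity), Real.sqrt_mul hm0.le, Real.sqrt_mul (by norm_num),
    mul_pow, mul_pow]
  have e5 : (n : ℝ) ^ ((m + 1) * n) = n ^ n * n ^ (m * n) := by
    rw [← pow_add]; ring_nf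
  rw [e5]
  have q1 := Real.sqrt_pos.mpr hm0
  have q2 := Real.sqrt_pos.mpr hn0
  have q3 := Real.sqrt_pos.mpr Real.pi_pos
  have q4 : 0 < Real.sqrt 2 := by positivity
  have q5 : 0 < (n : ℝ) ^ n := by positivity
  have q6 : 0 < (n : ℝ) ^ (m * n) := by positivity
  have q7 : 0 < (m : ℝ) ^ (m * n) := by positivity
  have q8 := Real.exp_pos (n : ℝ)
  have q9 := Real.exp_pos ((m : ℝ) * n)
  generalize ((m : ℝ) + 1) ^ ((m + 1) * n) = A at *
  generalize (m : ℝ) ^ (m * n) = B at *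
  generalize (n : ℝ) ^ (m * n) = C at *
  generalize (n : ℝ) ^ n = D at *
  generalize Real.exp (n : ℝ) = E at *
  generalize Real.exp ((m : ℝ) * n) = F at *
  generalize stirlingSeq n = s1 at *
  generalize stirlingSeq (m * n) = s2 at *
  generalize Real.sqrt (n : ℝ) = t1 at *
  generalize Real.sqrt (m : ℝ) = t2 at *
  generalize Real.sqrt 2 = t3 at *
  field_simp

/-- for all integers `k ≥ 3` and `n ≥ 1`,
`e^{-1/6}·((k-2)/(k-1))·f(k,n) ≤ C_{k,n} ≤ e^{1/12}·f(k,n)`. -/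
theorem genCatalan_bounds (k n : ℕ) (hk : 3 ≤ k) (hn : 1 ≤ n) :
    Real.exp (-(1 / 6)) * (((k : ℝ) - 2) / ((k : ℝ) - 1)) * genCatalanApprox k n ≤
        (genCatalan k n : ℝ) ∧
      (genCatalan k n : ℝ) ≤ Real.exp (1 / 12) * genCatalanApprox k n := by
  obtain ⟨m, rfl⟩ : ∃ m, k = m + 2 := ⟨k - 2, by omega⟩
  have hm : 1 ≤ m := by omega
  have hm0 : (1 : ℝ) ≤ m := by exact_mod_cast hm
  have hn0 : (1 : ℝ) ≤ n := by exact_mod_cast hn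
  have hM : 1 ≤ m * n := Nat.mul_pos hm hn
  have hN : 1 ≤ (m + 1) * n := Nat.mul_pos (by omega) hn
  have c1 : ((m + 2 : ℕ) : ℝ) - 1 = m + 1 := by push_cast; ring
  have c2 : ((m + 2 : ℕ) : ℝ) - 2 = m := by push_cast; ring
  have hf : 0 ≤ genCatalanApprox (m + 2) n := by
    unfold genCatalanApprox
    rw [c1, c2]
    positivity
  have q3 := Real.sqrt_pos.mpr Real.pi_pos
  have b1 := Stirling.sqrt_pi_le_stirlingSeq (n := n) (by omega)
  have b2 := Stirling.sqrt_pi_le_stirlingSeq (n := m * n) (by omega)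
  have b3 := Stirling.sqrt_pi_le_stirlingSeq (n := (m + 1) * n) (by omega)
  have u1 := gc_le_one n hn
  have u2 := gc_le_one (m * n) hM
  have anti : Stirling.stirlingSeq ((m + 1) * n) ≤ Stirling.stirlingSeq (m * n) := by
    obtain ⟨i, hi⟩ : ∃ i, m * n = i + 1 := ⟨m * n - 1, by omega⟩
    have : (m + 1) * n = (i + n) + 1 := by rw [add_mul, hi]; ring
    rw [hi, this]
    exact Stirling.stirlingSeq'_antitone (Nat.le_add_right i n)
  rw [gc_main m n hm hn, c1, c2]
  generalize Stirling.stirlingSeq ((m + 1) * n) = s3 at *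
  generalize Stirling.stirlingSeq (m * n) = s2 at *
  generalize Stirling.stirlingSeq n = s1 at *
  have p1 : 0 < s1 := by linarith
  have p2 : 0 < s2 := by linarith
  have p3 : 0 < s3 := by linarith
  have hmn : (1 : ℝ) ≤ m * n := by nlinarith
  constructor
  · refine mul_le_mul_of_nonneg_right ?_ hf
    refine mul_le_mul ?_ ?_ (by positivity) (by positivity)
    · rw [le_div_iff₀ (by positivity)]
      have hE : Real.exp (-(1 / 6)) * (Real.exp (1 / 12) * Real.exp (1 / 12)) = 1 := by
        rw [← Real.exp_add, ← Real.exp_add]; norm_num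
      calc Real.exp (-(1 / 6)) * (s1 * s2)
          ≤ Real.exp (-(1 / 6)) * ((Real.sqrt Real.pi * Real.exp (1 / 12)) *
              (Real.sqrt Real.pi * Real.exp (1 / 12))) := by gcongr
        _ = (Real.exp (-(1 / 6)) * (Real.exp (1 / 12) * Real.exp (1 / 12))) *
              (Real.sqrt Real.pi * Real.sqrt Real.pi) := by ring
        _ = Real.sqrt Real.pi * Real.sqrt Real.pi := by rw [hE, one_mul]
        _ ≤ _ := by gcongr
    · rw [div_le_div_iff₀ (by positivity) (by positivity)]
      nlinarith
  · refine mul_le_mul_of_nonneg_right ?_ hf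
    have h1 : Real.sqrt Real.pi * s3 / (s1 * s2) ≤ 1 := by
      rw [div_le_one (by positivity)]
      gcongr
    have h2 : (m * n : ℝ) / (m * n + 1) ≤ 1 := by
      rw [div_le_one (by positivity)]
      linarith
    have h3 : (1 : ℝ) ≤ Real.exp (1 / 12) := Real.one_le_exp (by norm_num)
    exact (mul_le_one₀ h1 (by positivity) h2).trans h3
end

section
/- For every integer k ≥ 3 and every n ≥ 1, the k-angulation flip graph K_{k,(k−2)n+2} on the k-angulations of the convex ((k−2)n+2)-gon is connected. -/
open Finset

/-- `e` is an edge of the dissection given by the diagonal set `t`: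
a polygon side or a diagonal of `t`. -/
def EdgeOfD {m : ℕ} (t : Finset (Sym2 (Fin m))) (e : Sym2 (Fin m)) : Prop :=
  IsSide e ∨ e ∈ t

/-- `b` is the cyclic successor of `a` among the elements of `F`. -/
def NextIn {m : ℕ} (F : Finset (Fin m)) (a b : Fin m) : Prop :=
  a ∈ F ∧ b ∈ F ∧ a ≠ b ∧ ∀ x ∈ F, ¬ CycBtw a b x

/-- `F` is the vertex set of a cell (face) of the dissection of the convex `m`-gon by the
pairwise non-crossing diagonal set `t`: every pair of cyclically consecutive vertices of
`F` is joined by an edge of the dissection, and no diagonal of `t` joins two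
non-consecutive vertices of `F`. -/
def IsFaceSet {m : ℕ} (t : Finset (Sym2 (Fin m))) (F : Finset (Fin m)) : Prop :=
  3 ≤ F.card ∧
  (∀ a b : Fin m, NextIn F a b → EdgeOfD t s(a, b)) ∧
  (∀ e ∈ t, ∀ a b : Fin m, e = s(a, b) → a ∈ F → b ∈ F → NextIn F a b ∨ NextIn F b a)

/-- `t` is a `k`-angulation of the convex `((k-2)n+2)`-gon: a set of `n - 1` pairwise
non-crossing diagonals subdividing the polygon into cells that are all `k`-gons. -/
def IsKAngulation (k n : ℕ) (t : Finset (Sym2 (Fin ((k - 2) * n + 2)))) : Prop :=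
  (∀ e ∈ t, IsDiagonal e) ∧
  (∀ e ∈ t, ∀ f ∈ t, ¬ Crosses e f) ∧
  t.card = n - 1 ∧
  (∀ F : Finset (Fin ((k - 2) * n + 2)), IsFaceSet t F → F.card = k)

/-- The type of `k`-angulations of the convex `((k-2)n+2)`-gon. -/
def KAngulation (k n : ℕ) : Type :=
  {t : Finset (Sym2 (Fin ((k - 2) * n + 2))) // IsKAngulation k n t}

instance (k n : ℕ) : DecidableEq (KAngulation k n) := fun a b =>
  decidable_of_iff (a.val = b.val) Subtype.ext_iff.symm

noncomputable instance (k n : ℕ) : Fintype (KAngulation k n) := by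
  classical exact Subtype.fintype _

/-- The `k`-angulation flip graph `K_{k,(k-2)n+2}`: vertices are the `k`-angulations of
the convex `((k-2)n+2)`-gon, two of them adjacent iff they differ in exactly one
diagonal (a flip). -/
def kAngGraph (k n : ℕ) : SimpleGraph (KAngulation k n) where
  Adj s t := (s.val \ t.val).card = 1 ∧ (t.val \ s.val).card = 1
  symm := ⟨fun s t h => ⟨h.2, h.1⟩⟩
  loopless := ⟨fun s h => by simp at h⟩

namespace KA

lemma xor_iff' (p q : Prop) : Xor' p q ↔ (p ∧ ¬ q) ∨ (q ∧ ¬ p) := by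
  by_cases hp : p <;> by_cases hq : q <;> simp [Xor', Xor, hp, hq]

lemma sub_val' {m : ℕ} (x a : Fin m) :
    (x - a).val = if a.val ≤ x.val then x.val - a.val else m + x.val - a.val := by
  have hx := x.isLt
  have ha := a.isLt
  rw [Fin.sub_def]
  simp only
  split_ifs with h
  · have : m - a.val + x.val = (x.val - a.val) + m := by omega
    rw [this, Nat.add_mod_right, Nat.mod_eq_of_lt (by omega)]
  · rw [Nat.mod_eq_of_lt (by omega)]; omega

lemma cycBtw_iff {m : ℕ} (a b x : Fin m) : CycBtw a b x ↔
    (a.val < b.val ∧ a.val < x.val ∧ x.val < b.val) ∨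
    (b.val < a.val ∧ (a.val < x.val ∨ x.val < b.val)) := by
  have hx := x.isLt
  have ha := a.isLt
  have hb := b.isLt
  unfold CycBtw
  rw [sub_val', sub_val']
  split_ifs <;> omega

lemma polyAdj_iff {m : ℕ} (hm : 3 ≤ m) (a b : Fin m) : PolyAdj a b ↔
    (b.val = a.val + 1 ∨ a.val = b.val + 1 ∨ (a.val = 0 ∧ b.val + 1 = m) ∨
      (b.val = 0 ∧ a.val + 1 = m)) := by
  have ha := a.isLt
  have hb := b.isLt
  unfold PolyAdj
  rw [sub_val', sub_val']
  split_ifs <;> omega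

lemma isSide_iff {m : ℕ} (hm : 3 ≤ m) (a b : Fin m) (hab : a.val < b.val) :
    IsSide s(a, b) ↔ (b.val = a.val + 1 ∨ (a.val = 0 ∧ b.val + 1 = m)) := by
  unfold IsSide
  constructor
  · rintro ⟨c, d, h, hp⟩
    rw [polyAdj_iff hm] at hp
    rcases Sym2.eq_iff.1 h with ⟨rfl, rfl⟩ | ⟨rfl, rfl⟩ <;> omega
  · intro h
    refine ⟨a, b, rfl, ?_⟩
    rw [polyAdj_iff hm]
    omega

lemma isDiagonal_iff {m : ℕ} (hm : 3 ≤ m) (a b : Fin m) (hab : a.val < b.val) :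
    IsDiagonal s(a, b) ↔ (a.val + 1 < b.val ∧ ¬ (a.val = 0 ∧ b.val + 1 = m)) := by
  unfold IsDiagonal
  constructor
  · rintro ⟨_, h⟩
    have := h a b rfl
    rw [polyAdj_iff hm] at this
    omega
  · intro h
    refine ⟨?_, ?_⟩
    · rw [Sym2.mk_isDiag_iff]
      intro hh
      rw [hh] at hab
      omega
    · intro c d hh
      rw [polyAdj_iff hm]
      rcases Sym2.eq_iff.1 hh with ⟨rfl, rfl⟩ | ⟨rfl, rfl⟩ <;> omega

lemma crosses_iff {m : ℕ} (a b c d : Fin m) (hab : a.val < b.val) (hcd : c.val < d.val) :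
    Crosses s(a, b) s(c, d) ↔
      ((a.val < c.val ∧ c.val < b.val ∧ b.val < d.val) ∨
       (c.val < a.val ∧ a.val < d.val ∧ d.val < b.val)) := by
  unfold Crosses
  constructor
  · intro h
    obtain ⟨c1, d1, h1, x1⟩ := h a b rfl
    obtain ⟨c2, d2, h2, x2⟩ := h b a Sym2.eq_swap
    simp only [cycBtw_iff, xor_iff'] at x1 x2
    rcases Sym2.eq_iff.1 h1 with ⟨rfl, rfl⟩ | ⟨rfl, rfl⟩ <;>
    rcases Sym2.eq_iff.1 h2 with ⟨rfl, rfl⟩ | ⟨rfl, rfl⟩ <;> omega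
  · intro h a' b' hh
    refine ⟨c, d, rfl, ?_⟩
    simp only [cycBtw_iff, xor_iff']
    rcases Sym2.eq_iff.1 hh with ⟨rfl, rfl⟩ | ⟨rfl, rfl⟩ <;> omega

/-- Noncrossing set of diagonals, in terms of the natural order. -/
structure Good {m : ℕ} (t : Finset (Sym2 (Fin m))) : Prop where
  nl : ∀ x : Fin m, s(x, x) ∉ t
  dg : ∀ a b : Fin m, a.val < b.val → s(a, b) ∈ t →
    a.val + 1 < b.val ∧ ¬ (a.val = 0 ∧ b.val + 1 = m)
  nc : ∀ a b c d : Fin m, a.val < b.val → c.val < d.val → s(a, b) ∈ t → s(c, d) ∈ t →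
    ¬ (a.val < c.val ∧ c.val < b.val ∧ b.val < d.val)

lemma exists_rep {m : ℕ} {t : Finset (Sym2 (Fin m))} (h : ∀ x : Fin m, s(x, x) ∉ t)
    {e : Sym2 (Fin m)} (he : e ∈ t) : ∃ a b : Fin m, a.val < b.val ∧ e = s(a, b) := by
  induction e using Sym2.ind with
  | _ x y =>
    rcases lt_trichotomy x.val y.val with hlt | heq | hgt
    · exact ⟨x, y, hlt, rfl⟩
    · have := Fin.ext heq
      subst this
      exact absurd he (h x)
    · exact ⟨y, x, hgt, Sym2.eq_swap⟩

lemma good_iff {m : ℕ} (hm : 3 ≤ m) (t : Finset (Sym2 (Fin m))) :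
    ((∀ e ∈ t, IsDiagonal e) ∧ (∀ e ∈ t, ∀ f ∈ t, ¬ Crosses e f)) ↔ Good t := by
  constructor
  · rintro ⟨h1, h2⟩
    refine ⟨?_, ?_, ?_⟩
    · intro x hx
      exact (h1 _ hx).1 (by simp)
    · intro a b hab h
      exact (isDiagonal_iff hm a b hab).1 (h1 _ h)
    · intro a b c d hab hcd h h' hc
      exact h2 _ h _ h' ((crosses_iff a b c d hab hcd).2 (Or.inl hc))
  · intro g
    refine ⟨?_, ?_⟩
    · intro e he
      obtain ⟨a, b, hab, rfl⟩ := exists_rep g.nl he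
      exact (isDiagonal_iff hm a b hab).2 (g.dg a b hab he)
    · intro e he f hf
      obtain ⟨a, b, hab, rfl⟩ := exists_rep g.nl he
      obtain ⟨c, d, hcd, rfl⟩ := exists_rep g.nl hf
      rw [crosses_iff a b c d hab hcd]
      have := g.nc a b c d hab hcd he hf
      have := g.nc c d a b hcd hab hf he
      tauto

/-- Edges (sides and diagonals) of the dissection as pairs of naturals. -/
def EN {m : ℕ} (t : Finset (Sym2 (Fin m))) (a b : ℕ) : Prop :=
  ∃ (ha : a < m) (hb : b < m), a < b ∧
    ((b = a + 1 ∨ (a = 0 ∧ b + 1 = m)) ∨ s((⟨a, ha⟩ : Fin m), (⟨b, hb⟩ : Fin m)) ∈ t)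

lemma EN.mem {m : ℕ} {t : Finset (Sym2 (Fin m))} {a b : Fin m} (hab : a.val < b.val)
    (h : s(a, b) ∈ t) : EN t a.val b.val := ⟨a.isLt, b.isLt, hab, Or.inr h⟩

lemma EN.lt {m : ℕ} {t : Finset (Sym2 (Fin m))} {a b : ℕ} (h : EN t a b) : a < b := by
  obtain ⟨_, _, h, _⟩ := h; exact h

lemma EN.ltm {m : ℕ} {t : Finset (Sym2 (Fin m))} {a b : ℕ} (h : EN t a b) : b < m := by
  obtain ⟨_, h, _, _⟩ := h; exact h

lemma EN.nc {m : ℕ} {t : Finset (Sym2 (Fin m))} (g : Good t) {a b c d : ℕ}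
    (h : EN t a b) (h' : EN t c d) : ¬ (a < c ∧ c < b ∧ b < d) := by
  obtain ⟨ha, hb, hab, h⟩ := h
  obtain ⟨hc, hd, hcd, h'⟩ := h'
  rcases h with h | h
  · omega
  rcases h' with h' | h'
  · omega
  exact g.nc ⟨a, ha⟩ ⟨b, hb⟩ ⟨c, hc⟩ ⟨d, hd⟩ hab hcd h h'

lemma EN.side {m : ℕ} (t : Finset (Sym2 (Fin m))) {a : ℕ} (h : a + 1 < m) : EN t a (a + 1) :=
  ⟨by omega, h, by omega, Or.inl (Or.inl rfl)⟩

lemma EN_iff {m : ℕ} (hm : 3 ≤ m) (t : Finset (Sym2 (Fin m))) (a b : Fin m)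
    (hab : a.val < b.val) : EN t a.val b.val ↔ EdgeOfD t s(a, b) := by
  unfold EN EdgeOfD
  rw [isSide_iff hm a b hab]
  constructor
  · rintro ⟨_, _, _, h⟩
    exact h
  · intro h
    exact ⟨a.isLt, b.isLt, hab, h⟩

/-- `c` is visible from the edge `(a,b)` from below. -/
def Vis {m : ℕ} (t : Finset (Sym2 (Fin m))) (a b c : ℕ) : Prop :=
  a ≤ c ∧ c ≤ b ∧ ∀ x y, EN t x y → a ≤ x → y ≤ b → x < c → c < y → x = a ∧ y = b

lemma vis_next {m : ℕ} {t : Finset (Sym2 (Fin m))} (g : Good t) {a b x : ℕ}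
    (hab : a + 1 < b) (hb : b < m) (hx : Vis t a b x) (hxb : x < b) :
    ∃ y, x < y ∧ y ≤ b ∧ Vis t a b y ∧ EN t x y ∧ ¬ (x = a ∧ y = b) := by
  classical
  obtain ⟨h1, h2, h3⟩ := hx
  let S := (Finset.range (b + 1)).filter (fun y => EN t x y ∧ ¬ (x = a ∧ y = b))
  have hS : S.Nonempty := by
    refine ⟨x + 1, ?_⟩
    simp only [S, Finset.mem_filter, Finset.mem_range]
    refine ⟨by omega, EN.side t (by omega), by omega⟩
  obtain ⟨y, hmem, hmax⟩ := Finset.exists_max_image S (fun y => y) hS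
  simp only [S, Finset.mem_filter, Finset.mem_range] at hmem hmax
  obtain ⟨hy1, hy2, hy3⟩ := hmem
  have hxy := hy2.lt
  refine ⟨y, hxy, by omega, ⟨by omega, by omega, ?_⟩, hy2, hy3⟩
  intro u v huv hau hvb huy hyv
  rcases lt_trichotomy u x with hlt | heq | hgt
  · exact h3 u v huv hau hvb hlt (by omega)
  · subst heq
    by_contra hne
    have := hmax v ⟨by omega, huv, hne⟩
    omega
  · exact absurd ⟨hgt, huy, hyv⟩ (EN.nc g hy2 huv)

lemma vis_left {m : ℕ} (t : Finset (Sym2 (Fin m))) {a b : ℕ} (hab : a ≤ b) : Vis t a b a :=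
  ⟨le_refl _, hab, fun x y _ h1 _ h3 _ => by omega⟩

lemma vis_right {m : ℕ} (t : Finset (Sym2 (Fin m))) {a b : ℕ} (hab : a ≤ b) : Vis t a b b :=
  ⟨hab, le_refl _, fun x y _ h1 _ h3 _ => by omega⟩

def Adm {m : ℕ} (q : ℕ) (t : Finset (Sym2 (Fin m))) : Prop :=
  ∀ a b, EN t a b → a + 1 ≡ b [MOD q]

lemma vis_resid {m q : ℕ} (hq : 1 ≤ q) {t : Finset (Sym2 (Fin m))} (g : Good t) (A : Adm q t)
    {a b : ℕ} (hE : EN t a b) (hab : a + 1 < b) (r : ℕ) :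
    ∃ c, a < c ∧ c < b ∧ Vis t a b c ∧ c ≡ r [MOD q] := by
  have hb := hE.ltm
  have key : ∀ j, j < q → ∃ c, a < c ∧ c < b ∧ Vis t a b c ∧ c ≡ a + 1 + j [MOD q] := by
    intro j
    induction j with
    | zero =>
      intro _
      obtain ⟨y, h1, h2, h3, h4, h5⟩ := vis_next g hab hb (vis_left t (by omega)) (by omega)
      exact ⟨y, h1, by omega, h3, (A _ _ h4).symm⟩
    | succ j ih =>
      intro hj
      obtain ⟨c, h1, h2, h3, h4⟩ := ih (by omega)
      obtain ⟨y, k1, k2, k3, k4, k5⟩ := vis_next g hab hb h3 h2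
      have e : y ≡ a + 1 + (j + 1) [MOD q] := (A _ _ k4).symm.trans (h4.add_right 1)
      refine ⟨y, by omega, ?_, k3, e⟩
      rcases Nat.lt_or_ge y b with h | h
      · exact h
      · exfalso
        have hyb : y = b := by omega
        subst hyb
        have e2 : a + 1 + 0 ≡ a + 1 + (j + 1) [MOD q] := (A _ _ hE).trans e
        have e3 := Nat.ModEq.add_left_cancel' _ e2
        have := Nat.ModEq.eq_of_lt_of_lt e3 (by omega) hj
        omega
  -- choose the right residue
  have h0 : ∃ j, j < q ∧ a + 1 + j ≡ r [MOD q] := by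
    refine ⟨(r + (q - 1) * (a + 1)) % q, Nat.mod_lt _ (by omega), ?_⟩
    have : a + 1 + (r + (q - 1) * (a + 1)) = r + q * (a + 1) := by
      obtain ⟨p, rfl⟩ : ∃ p, q = p + 1 := ⟨q - 1, by omega⟩
      simp; ring
    calc a + 1 + (r + (q - 1) * (a + 1)) % q ≡ a + 1 + (r + (q - 1) * (a + 1)) [MOD q] :=
          Nat.ModEq.add_left _ (Nat.mod_modEq _ _)
      _ = r + q * (a + 1) := this
      _ ≡ r [MOD q] := by simp [Nat.ModEq]
  obtain ⟨j, hj, hr⟩ := h0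
  obtain ⟨c, h1, h2, h3, h4⟩ := key j hj
  exact ⟨c, h1, h2, h3, h4.trans hr⟩

lemma vis_unique {m : ℕ} {t : Finset (Sym2 (Fin m))} (g : Good t) {a b a' b' c : ℕ}
    (h : EN t a b) (h' : EN t a' b') (v : Vis t a b c) (v' : Vis t a' b' c)
    (h1 : a < c) (h2 : c < b) (h1' : a' < c) (h2' : c < b') : a = a' ∧ b = b' := by
  have n1 := EN.nc g h h'
  have n2 := EN.nc g h' h
  have k1 := v.2.2 a' b' h'
  have k2 := v'.2.2 a b h
  rcases Nat.lt_or_ge a' a with h3 | h3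
  · have := k2 (by omega) (by omega) h1 h2
    omega
  · rcases Nat.lt_or_ge b b' with h4 | h4
    · have : a' = a := by omega
      have := k2 (by omega) (by omega) h1 h2
      omega
    · have := k1 (by omega) (by omega) h1' h2'
      omega

lemma card_bound {m q n : ℕ} (hq : 1 ≤ q) (hn : 1 ≤ n) (hm : m = q * n + 2)
    {t : Finset (Sym2 (Fin m))} (g : Good t) (A : Adm q t) : t.card + 1 ≤ n := by
  classical
  have hqn : 1 ≤ q * n := Nat.mul_pos hq hn
  let z : Fin m := ⟨0, by omega⟩
  let w : Fin m := ⟨m - 1, by omega⟩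
  have hzw : s(z, w) ∉ t := by
    intro h
    exact (g.dg z w (by simp [z, w]; omega) h).2 ⟨rfl, by simp [w]; omega⟩
  rw [← Finset.card_insert_of_notMem hzw]
  let C := (Finset.range n).image (fun j => 1 + q * j)
  have hC : C.card ≤ n := by
    simpa using (Finset.card_image_le (s := Finset.range n) (f := fun j => 1 + q * j))
  refine le_trans ?_ hC
  have key : ∀ e ∈ insert s(z, w) t, ∃ c, c ∈ C ∧ ∃ a b : Fin m, e = s(a, b) ∧
      EN t a.val b.val ∧ Vis t a.val b.val c ∧ a.val < c ∧ c < b.val := by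
    intro e he
    have : ∃ a b : Fin m, e = s(a, b) ∧ EN t a.val b.val ∧ a.val + 1 < b.val := by
      rcases Finset.mem_insert.1 he with rfl | he
      · refine ⟨z, w, rfl, ⟨z.isLt, w.isLt, ?_, Or.inl (Or.inr ⟨rfl, ?_⟩)⟩, ?_⟩ <;>
          simp only [z, w] <;> omega
      · obtain ⟨a, b, hab, rfl⟩ := exists_rep g.nl he
        exact ⟨a, b, rfl, EN.mem hab he, (g.dg a b hab he).1⟩
    obtain ⟨a, b, rfl, h1, h2⟩ := this
    obtain ⟨c, k1, k2, k3, k4⟩ := vis_resid hq g A h1 h2 1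
    refine ⟨c, ?_, a, b, rfl, h1, k3, k1, k2⟩
    have := b.isLt
    have hd := (Nat.modEq_iff_dvd' (by omega : 1 ≤ c)).1 k4.symm
    obtain ⟨j, hj⟩ := hd
    simp only [C, Finset.mem_image, Finset.mem_range]
    refine ⟨j, ?_, by omega⟩
    by_contra hjn
    have := Nat.mul_le_mul_left q (Nat.le_of_not_lt hjn)
    omega
  choose! f hf using key
  refine Finset.card_le_card_of_injOn f (fun e he => (hf e he).1) ?_
  intro e he e' he' heq
  obtain ⟨_, a, b, rfl, h1, h2, h3, h4⟩ := hf e he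
  obtain ⟨_, a', b', rfl, h1', h2', h3', h4'⟩ := hf e' he'
  rw [← heq] at h2' h3' h4'
  obtain ⟨r1, r2⟩ := vis_unique g h1 h1' h2 h2' h3 h4 h3' h4'
  rw [Fin.ext r1, Fin.ext r2]

lemma nextIn_of_lt {m : ℕ} {F : Finset (Fin m)} {a b : Fin m} (hab : a.val < b.val) :
    NextIn F a b ↔ a ∈ F ∧ b ∈ F ∧ ∀ x ∈ F, ¬ (a.val < x.val ∧ x.val < b.val) := by
  unfold NextIn
  constructor
  · rintro ⟨h1, h2, h3, h4⟩
    refine ⟨h1, h2, fun x hx hh => h4 x hx ?_⟩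
    rw [cycBtw_iff]; omega
  · rintro ⟨h1, h2, h4⟩
    refine ⟨h1, h2, fun h => by rw [h] at hab; omega, fun x hx hh => h4 x hx ?_⟩
    rw [cycBtw_iff] at hh; omega

lemma nextIn_of_gt {m : ℕ} {F : Finset (Fin m)} {a b : Fin m} (hab : b.val < a.val) :
    NextIn F a b ↔ a ∈ F ∧ b ∈ F ∧ ∀ x ∈ F, b.val ≤ x.val ∧ x.val ≤ a.val := by
  unfold NextIn
  constructor
  · rintro ⟨h1, h2, h3, h4⟩
    refine ⟨h1, h2, fun x hx => ?_⟩
    have := h4 x hx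
    rw [cycBtw_iff] at this; omega
  · rintro ⟨h1, h2, h4⟩
    refine ⟨h1, h2, fun h => by rw [h] at hab; omega, fun x hx hh => ?_⟩
    have := h4 x hx
    rw [cycBtw_iff] at hh; omega

lemma face_count {m q : ℕ} {F : Finset (Fin m)} {f0 : Fin m} (h0 : f0 ∈ F)
    (hmin : ∀ x ∈ F, f0.val ≤ x.val)
    (hE : ∀ a b : Fin m, a.val < b.val → NextIn F a b → a.val + 1 ≡ b.val [MOD q]) :
    ∀ N, ∀ x ∈ F, x.val = N →
      f0.val + (F.filter (fun y => y.val < x.val)).card ≡ x.val [MOD q] := by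
  intro N
  induction N using Nat.strong_induction_on with
  | _ N ih =>
    intro x hx hN
    by_cases hx0 : x.val = f0.val
    · have : F.filter (fun y => y.val < x.val) = ∅ := by
        rw [Finset.filter_eq_empty_iff]
        intro y hy
        have := hmin y hy
        omega
      rw [this, hx0]
      simp [Nat.ModEq]
    · have hlt : f0.val < x.val := by have := hmin x hx; omega
      have hne : (F.filter (fun y => y.val < x.val)).Nonempty :=
        ⟨f0, by simp only [Finset.mem_filter]; exact ⟨h0, hlt⟩⟩
      obtain ⟨p, hp, hmax⟩ := Finset.exists_max_image _ (fun y : Fin m => y.val) hne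
      simp only [Finset.mem_filter] at hp hmax
      have hins : F.filter (fun y => y.val < x.val)
          = insert p (F.filter (fun y => y.val < p.val)) := by
        ext y
        simp only [Finset.mem_filter, Finset.mem_insert]
        constructor
        · rintro ⟨h1, h2⟩
          by_cases hyp : y = p
          · exact Or.inl hyp
          · have h3 := hmax y ⟨h1, h2⟩
            have : y.val ≠ p.val := fun h => hyp (Fin.ext h)
            exact Or.inr ⟨h1, by omega⟩
        · rintro (rfl | ⟨h1, h2⟩)
          · exact hp
          · exact ⟨h1, by omega⟩
      rw [hins, Finset.card_insert_of_notMem (by simp)]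
      have i1 := ih p.val (by omega) p hp.1 rfl
      have i2 := hE p x hp.2 ((nextIn_of_lt hp.2).2 ⟨hp.1, hx, fun y hy hh => by
        have := hmax y ⟨hy, hh.2⟩
        omega⟩)
      exact (i1.add_right 1).trans i2

lemma card_filter_max {m : ℕ} {F : Finset (Fin m)} {b : Fin m} (hb : b ∈ F)
    (hmax : ∀ x ∈ F, x.val ≤ b.val) : (F.filter (fun y => y.val < b.val)).card + 1 = F.card := by
  rw [← Finset.card_erase_add_one hb]
  congr 2
  ext y
  simp only [Finset.mem_filter, Finset.mem_erase]
  constructor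
  · rintro ⟨h1, h2⟩
    exact ⟨fun h => by rw [h] at h2; omega, h1⟩
  · rintro ⟨h1, h2⟩
    have := hmax y h2
    have : y.val ≠ b.val := fun h => h1 (Fin.ext h)
    exact ⟨h2, by omega⟩

lemma visFace {m : ℕ} (hm : 3 ≤ m) {t : Finset (Sym2 (Fin m))} (g : Good t) {a b : Fin m}
    (hab : a.val + 1 < b.val) (hE : s(a, b) ∈ t) (G : Finset (Fin m))
    (hG : ∀ x, x ∈ G ↔ Vis t a.val b.val x.val) : IsFaceSet t G := by
  have hbm := b.isLt
  have haG : a ∈ G := (hG a).2 (vis_left t (by omega))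
  have hbG : b ∈ G := (hG b).2 (vis_right t (by omega))
  refine ⟨?_, ?_, ?_⟩
  · obtain ⟨y, h1, h2, h3, h4, h5⟩ := vis_next g hab hbm (vis_left t (by omega)) (by omega)
    have hym : y < m := by omega
    have hyG : (⟨y, hym⟩ : Fin m) ∈ G := (hG _).2 h3
    have hsub : ({a, ⟨y, hym⟩, b} : Finset (Fin m)) ⊆ G := by
      intro z hz
      simp only [Finset.mem_insert, Finset.mem_singleton] at hz
      rcases hz with rfl | rfl | rfl <;> assumption
    have hc : ({a, ⟨y, hym⟩, b} : Finset (Fin m)).card = 3 := by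
      rw [Finset.card_eq_three]
      refine ⟨_, _, _, ?_, ?_, ?_, rfl⟩ <;> rw [Ne, Fin.ext_iff] <;> (try simp only) <;> omega
    rw [← hc]
    exact Finset.card_le_card hsub
  · intro p x hpx
    rcases lt_trichotomy p.val x.val with hlt | heq | hgt
    · rw [nextIn_of_lt hlt] at hpx
      obtain ⟨hp, hx, hn⟩ := hpx
      have vp := (hG p).1 hp
      have vx := (hG x).1 hx
      obtain ⟨y, h1, h2, h3, h4, h5⟩ := vis_next g hab hbm vp (by have := vx.2.1; omega)
      have hym : y < m := by omega
      have := hn ⟨y, hym⟩ ((hG _).2 h3)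
      simp only at this
      have hxy : x.val = y := by
        by_contra hne
        have := vx.2.2 p.val y h4 vp.1 h2 hlt (by omega)
        exact h5 this
      rw [← EN_iff hm t p x hlt, hxy]
      exact h4
    · exact absurd (Fin.ext heq) hpx.2.2.1
    · rw [nextIn_of_gt hgt] at hpx
      obtain ⟨hp, hx, hn⟩ := hpx
      have := hn a haG
      have := hn b hbG
      have vp := (hG p).1 hp
      have vx := (hG x).1 hx
      have e1 : p = b := Fin.ext (by have := vp.2.1; omega)
      have e2 : x = a := Fin.ext (by have := vx.1; omega)
      rw [e1, e2, Sym2.eq_swap]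
      exact Or.inr hE
  · have key : ∀ x y : Fin m, x.val < y.val → s(x, y) ∈ t → x ∈ G → y ∈ G →
        NextIn G x y ∨ NextIn G y x := by
      intro x y hxy ht hx hy
      have vx := (hG x).1 hx
      have vy := (hG y).1 hy
      rw [nextIn_of_lt hxy, nextIn_of_gt hxy]
      by_cases h : x.val = a.val ∧ y.val = b.val
      · right
        refine ⟨hy, hx, fun z hz => ?_⟩
        have vz := (hG z).1 hz
        rw [h.1, h.2]
        exact ⟨vz.1, vz.2.1⟩
      · left
        refine ⟨hx, hy, fun z hz hh => h ?_⟩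
        have vz := (hG z).1 hz
        exact vz.2.2 _ _ (EN.mem hxy ht) vx.1 vy.2.1 hh.1 hh.2
    intro e he x y hexy hx hy
    subst hexy
    rcases lt_trichotomy x.val y.val with hlt | heq | hgt
    · exact key x y hlt he hx hy
    · have := Fin.ext heq
      subst this
      exact absurd he (g.nl x)
    · rw [Sym2.eq_swap] at he
      exact (key y x hgt he hy hx).symm

lemma adm_of_faces {m q n : ℕ} (hm3 : 3 ≤ m) (hm : m = q * n + 2)
    {t : Finset (Sym2 (Fin m))} (g : Good t)
    (hF : ∀ F : Finset (Fin m), IsFaceSet t F → F.card = q + 2) : Adm q t := by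
  classical
  have main : ∀ N, ∀ a b, b - a = N → EN t a b → a + 1 ≡ b [MOD q] := by
    intro N
    induction N using Nat.strong_induction_on with
    | _ N ih =>
      rintro a b hN ⟨ha, hb, hab, (rfl | ⟨rfl, h⟩) | h⟩
      · rfl
      · have : b = 0 + 1 + q * n := by omega
        rw [this]
        simp [Nat.ModEq]
      · have hd := (g.dg _ _ hab h).1
        simp only at hd
        let G : Finset (Fin m) := Finset.univ.filter (fun x => Vis t a b x.val)
        have hG : ∀ x, x ∈ G ↔ Vis t a b x.val := by intro x; simp [G]
        have face := visFace hm3 g hd h G hG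
        have hc := hF G face
        have haG : (⟨a, ha⟩ : Fin m) ∈ G := (hG _).2 (vis_left t (by omega))
        have hbG : (⟨b, hb⟩ : Fin m) ∈ G := (hG _).2 (vis_right t (by omega))
        obtain ⟨y, h1, h2, h3, h4, h5⟩ := vis_next g hd hb (vis_left t (by omega)) (by omega)
        have hym : y < m := by omega
        have hyG : (⟨y, hym⟩ : Fin m) ∈ G := (hG _).2 h3
        have cnt := face_count (q := q) haG (fun x hx => ((hG x).1 hx).1) (by
          intro p x hpx hn
          have hn' := (nextIn_of_lt hpx).1 hn
          have e := (EN_iff hm3 t p x hpx).2 (face.2.1 p x hn)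
          have vp := (hG p).1 hn'.1
          have vx := (hG x).1 hn'.2.1
          have ny := hn'.2.2 _ hyG
          simp only at ny
          have := vp.1
          have := vx.2.1
          exact ih (x.val - p.val) (by omega) _ _ rfl e) b ⟨b, hb⟩ hbG rfl
        have cm := card_filter_max hbG (fun x hx => ((hG x).1 hx).2.1)
        have : (G.filter (fun y => y.val < (⟨b, hb⟩ : Fin m).val)).card = 1 + q := by omega
        rw [this] at cnt
        simp only at cnt
        have e : a + (1 + q) ≡ a + 1 [MOD q] := by
          rw [← add_assoc]; simp [Nat.ModEq]
        exact e.symm.trans cnt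
  intro a b h
  exact main _ a b rfl h

lemma face_around {m : ℕ} {F : Finset (Fin m)} {c u v : Fin m} (hc : c ∉ F) (hu : u ∈ F)
    (hv : v ∈ F) (huc : u.val < c.val) (hcv : c.val < v.val) :
    ∃ p s : Fin m, p.val < c.val ∧ c.val < s.val ∧ u.val ≤ p.val ∧ s.val ≤ v.val ∧
      NextIn F p s := by
  classical
  obtain ⟨p, hp, hpm⟩ := Finset.exists_max_image (F.filter (fun x => x.val < c.val))
    (fun x => x.val) ⟨u, by simp only [Finset.mem_filter]; exact ⟨hu, huc⟩⟩
  obtain ⟨s, hs, hsm⟩ := Finset.exists_min_image (F.filter (fun x => c.val < x.val))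
    (fun x => x.val) ⟨v, by simp only [Finset.mem_filter]; exact ⟨hv, hcv⟩⟩
  simp only [Finset.mem_filter] at hp hpm hs hsm
  refine ⟨p, s, hp.2, hs.2, hpm u ⟨hu, huc⟩, hsm v ⟨hv, hcv⟩, ?_⟩
  rw [nextIn_of_lt (by omega)]
  refine ⟨hp.1, hs.1, fun x hx hh => ?_⟩
  rcases lt_trichotomy x.val c.val with h | h | h
  · have := hpm x ⟨hx, h⟩; omega
  · rw [Fin.ext h] at hx; exact hc hx
  · have := hsm x ⟨hx, h⟩; omega

lemma insert_good {m : ℕ} {t : Finset (Sym2 (Fin m))} (g : Good t) {a b : Fin m}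
    (h1 : a.val + 1 < b.val) (h2 : ¬ (a.val = 0 ∧ b.val + 1 = m))
    (h3 : ∀ c d : Fin m, c.val < d.val → s(c, d) ∈ t →
      ¬ (a.val < c.val ∧ c.val < b.val ∧ b.val < d.val) ∧
      ¬ (c.val < a.val ∧ a.val < d.val ∧ d.val < b.val)) : Good (insert s(a, b) t) := by
  have rep : ∀ x y : Fin m, x.val < y.val → s(x, y) = s(a, b) → x = a ∧ y = b := by
    intro x y hxy h
    rcases Sym2.eq_iff.1 h with h | ⟨rfl, rfl⟩
    · exact h
    · omega
  refine ⟨?_, ?_, ?_⟩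
  · intro x hx
    rcases Finset.mem_insert.1 hx with h | h
    · rcases Sym2.eq_iff.1 h with ⟨rfl, rfl⟩ | ⟨rfl, rfl⟩ <;> omega
    · exact g.nl x h
  · intro x y hxy h
    rcases Finset.mem_insert.1 h with h | h
    · obtain ⟨rfl, rfl⟩ := rep x y hxy h
      exact ⟨h1, h2⟩
    · exact g.dg x y hxy h
  · intro x y c d hxy hcd h h'
    rcases Finset.mem_insert.1 h with e | e <;> rcases Finset.mem_insert.1 h' with e' | e'
    · obtain ⟨rfl, rfl⟩ := rep x y hxy e
      obtain ⟨rfl, rfl⟩ := rep c d hcd e'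
      omega
    · obtain ⟨rfl, rfl⟩ := rep x y hxy e
      exact (h3 c d hcd e').1
    · obtain ⟨rfl, rfl⟩ := rep c d hcd e'
      exact (h3 x y hxy e).2
    · exact g.nc x y c d hxy hcd e e'

lemma insert_adm {m q : ℕ} {t : Finset (Sym2 (Fin m))} (A : Adm q t) {a b : Fin m}
    (hab : a.val < b.val)
    (h : a.val + 1 ≡ b.val [MOD q]) : Adm q (insert s(a, b) t) := by
  rintro x y ⟨hx, hy, hxy, h1 | h1⟩
  · exact A x y ⟨hx, hy, hxy, Or.inl h1⟩
  · rcases Finset.mem_insert.1 h1 with h2 | h2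
    · rcases Sym2.eq_iff.1 h2 with ⟨rfl, rfl⟩ | ⟨rfl, rfl⟩
      · exact h
      · simp only at hab; omega
    · exact A x y ⟨hx, hy, hxy, Or.inr h2⟩

lemma Good.mono {m : ℕ} {t t' : Finset (Sym2 (Fin m))} (g : Good t) (h : t' ⊆ t) : Good t' :=
  ⟨fun x hx => g.nl x (h hx), fun a b hab hh => g.dg a b hab (h hh),
   fun a b c d hab hcd h1 h2 => g.nc a b c d hab hcd (h h1) (h h2)⟩

lemma Adm.mono {m q : ℕ} {t t' : Finset (Sym2 (Fin m))} (A : Adm q t) (h : t' ⊆ t) :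
    Adm q t' := by
  rintro x y ⟨hx, hy, hxy, h1 | h1⟩
  · exact A x y ⟨hx, hy, hxy, Or.inl h1⟩
  · exact A x y ⟨hx, hy, hxy, Or.inr (h h1)⟩

lemma faces_of_adm {m q n : ℕ} (hq : 1 ≤ q) (hn : 1 ≤ n) (hm : m = q * n + 2)
    {t : Finset (Sym2 (Fin m))} (g : Good t) (A : Adm q t) (hcard : t.card = n - 1)
    (F : Finset (Fin m)) (hF : IsFaceSet t F) : F.card = q + 2 := by
  classical
  have hqn : 1 ≤ q * n := Nat.mul_pos hq hn
  have hm3 : 3 ≤ m := by omega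
  obtain ⟨hF3, hFe, hFd⟩ := hF
  have hne : F.Nonempty := Finset.card_pos.1 (by omega)
  obtain ⟨f0, hf0, hmin⟩ := Finset.exists_min_image F (fun x => x.val) hne
  obtain ⟨f1, hf1, hmax⟩ := Finset.exists_max_image F (fun x => x.val) hne
  have hEdge : ∀ a b : Fin m, a.val < b.val → NextIn F a b → EN t a.val b.val :=
    fun a b hab hh => (EN_iff hm3 t a b hab).2 (hFe a b hh)
  have cnt := face_count (q := q) hf0 hmin (fun a b hab hh => A _ _ (hEdge a b hab hh))
  have c1 := card_filter_max hf1 hmax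
  have h01 : f0.val < f1.val := by
    by_contra hh
    have : F.filter (fun y => y.val < f1.val) = ∅ := by
      rw [Finset.filter_eq_empty_iff]
      intro y hy
      have := hmin y hy
      omega
    rw [this] at c1
    simp at c1
    omega
  have e01 : EN t f0.val f1.val := by
    rw [EN_iff hm3 t f0 f1 h01, Sym2.eq_swap]
    exact hFe f1 f0 ((nextIn_of_gt h01).2 ⟨hf1, hf0, fun x hx => ⟨hmin x hx, hmax x hx⟩⟩)
  have r1 : f0.val + 1 ≡ f0.val + (F.filter (fun y => y.val < f1.val)).card [MOD q] :=
    (A _ _ e01).trans (cnt _ f1 hf1 rfl).symm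
  have r2 := Nat.ModEq.add_left_cancel' _ r1
  obtain ⟨s, hs⟩ := (Nat.modEq_iff_dvd' (by omega)).1 r2
  have hFs : F.card = q * s + 2 := by omega
  rcases Nat.lt_or_ge s 2 with h2 | h2
  · interval_cases s
    · omega
    · omega
  exfalso
  have hqs := Nat.mul_le_mul_left q h2
  -- the counting map is a bijection onto range
  have surj : ∃ x ∈ F, (F.filter (fun y => y.val < x.val)).card = q + 1 := by
    have inj : Set.InjOn (fun x : Fin m => (F.filter (fun y => y.val < x.val)).card) F := by
      have aux : ∀ x y : Fin m, x ∈ F → x.val < y.val →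
          (F.filter (fun z => z.val < x.val)).card < (F.filter (fun z => z.val < y.val)).card := by
        intro x y hx hxy
        apply Finset.card_lt_card
        rw [Finset.ssubset_iff_of_subset]
        · refine ⟨x, ?_, ?_⟩ <;> simp only [Finset.mem_filter]
          · exact ⟨hx, hxy⟩
          · omega
        · intro z
          simp only [Finset.mem_filter]
          rintro ⟨h1, h2⟩
          exact ⟨h1, by omega⟩
      intro x hx y hy hxy
      simp only at hxy
      rcases lt_trichotomy x.val y.val with h | h | h
      · have := aux x y hx h; omega
      · exact Fin.ext h
      · have := aux y x hy h; omega
    have himg : F.image (fun x : Fin m => (F.filter (fun y => y.val < x.val)).card)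
        = Finset.range F.card := by
      apply Finset.eq_of_subset_of_card_le
      · intro z hz
        obtain ⟨x, hx, rfl⟩ := Finset.mem_image.1 hz
        rw [Finset.mem_range]
        apply Finset.card_lt_card
        rw [Finset.ssubset_iff_of_subset (Finset.filter_subset _ _)]
        exact ⟨x, hx, by simp⟩
      · rw [Finset.card_image_of_injOn inj, Finset.card_range]
    have : q + 1 ∈ Finset.range F.card := by rw [Finset.mem_range]; omega
    rw [← himg] at this
    obtain ⟨x, hx, h⟩ := Finset.mem_image.1 this
    exact ⟨x, hx, h⟩
  obtain ⟨x, hx, hxc⟩ := surj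
  have hxf1 : x.val < f1.val := by
    have h1 := hmax x hx
    by_contra hh
    have : x = f1 := Fin.ext (by omega)
    rw [this] at hxc
    omega
  -- an element strictly between
  obtain ⟨y, hy, hy0, hyx⟩ : ∃ y ∈ F, f0.val < y.val ∧ y.val < x.val := by
    have : 1 < (F.filter (fun y => y.val < x.val)).card := by omega
    obtain ⟨y, hy, hyf⟩ := Finset.exists_mem_ne this f0
    simp only [Finset.mem_filter] at hy
    have h1 := hmin y hy.1
    have : y.val ≠ f0.val := fun h => hyf (Fin.ext h)
    exact ⟨y, hy.1, by omega, hy.2⟩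
  have rx : f0.val + 1 ≡ x.val [MOD q] := by
    have := cnt _ x hx rfl
    rw [hxc] at this
    refine Nat.ModEq.trans ?_ this
    have e : f0.val + (q + 1) = f0.val + 1 + q := by omega
    rw [e]
    simp [Nat.ModEq]
  have hnot : s(f0, x) ∉ t := by
    intro h
    rcases hFd _ h f0 x rfl hf0 hx with h | h
    · rw [nextIn_of_lt (by omega)] at h
      exact h.2.2 y hy ⟨hy0, hyx⟩
    · rw [nextIn_of_gt (by omega)] at h
      have := h.2.2 f1 hf1
      omega
  have hf1m := f1.isLt
  have G' : Good (insert s(f0, x) t) := by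
    refine insert_good g (by omega) (by omega) ?_
    intro c d hcd hmem
    have hE := EN.mem hcd hmem
    have n1 := EN.nc g hE e01
    have n2 := EN.nc g e01 hE
    refine ⟨?_, by omega⟩
    rintro ⟨k1, k2, k3⟩
    by_cases hcF : c ∈ F
    · by_cases hdF : d ∈ F
      · rcases hFd _ hmem c d rfl hcF hdF with h | h
        · rw [nextIn_of_lt hcd] at h
          exact h.2.2 x hx ⟨k2, k3⟩
        · rw [nextIn_of_gt hcd] at h
          have := h.2.2 f0 hf0
          omega
      · have hdf1 : d.val ≠ f1.val := fun h => hdF (by rw [Fin.ext h]; exact hf1)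
        obtain ⟨p, s, p1, p2, p3, p4, p5⟩ :=
          face_around hdF hx hf1 k3 (by omega)
        have := EN.nc g hE (hEdge p s (by omega) p5)
        omega
    · obtain ⟨p, s, p1, p2, p3, p4, p5⟩ := face_around hcF hf0 hx k1 k2
      have := EN.nc g (hEdge p s (by omega) p5) hE
      omega
  have A' : Adm q (insert s(f0, x) t) := insert_adm A (by omega) rx
  have bound := card_bound hq hn hm G' A'
  rw [Finset.card_insert_of_notMem hnot] at bound
  omega

lemma flip_step {m q n : ℕ} (hq : 1 ≤ q) (hn : 1 ≤ n) (hm : m = q * n + 2) (z : Fin m)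
    (hz : z.val = 0)
    {t : Finset (Sym2 (Fin m))} (g : Good t) (A : Adm q t)
    (hex : ∃ e ∈ t, z ∉ e) :
    ∃ t' : Finset (Sym2 (Fin m)), Good t' ∧ Adm q t' ∧ t'.card = t.card ∧
      (t \ t').card = 1 ∧ (t' \ t).card = 1 ∧
      (t'.filter (fun e => z ∉ e)).card < (t.filter (fun e => z ∉ e)).card := by
  classical
  let S : Finset (Fin m × Fin m) := Finset.univ.filter
    (fun p => p.1.val < p.2.val ∧ s(p.1, p.2) ∈ t ∧ 0 < p.1.val)
  have hS : S.Nonempty := by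
    obtain ⟨e, he, hze⟩ := hex
    obtain ⟨a, b, hab, rfl⟩ := exists_rep g.nl he
    refine ⟨(a, b), ?_⟩
    simp only [S, Finset.mem_filter, Finset.mem_univ, true_and]
    refine ⟨hab, he, ?_⟩
    by_contra h
    apply hze
    rw [Sym2.mem_iff]
    left
    exact Fin.ext (by omega)
  obtain ⟨⟨a, b⟩, hmem, hmax⟩ := Finset.exists_max_image S (fun p => p.2.val - p.1.val) hS
  simp only [S, Finset.mem_filter, Finset.mem_univ, true_and, Prod.forall] at hmem hmax
  obtain ⟨hab, hE, ha0⟩ := hmem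
  have hbm := b.isLt
  have hd := g.dg a b hab hE
  obtain ⟨c, c1, c2, c3, c4⟩ := vis_resid hq g A (EN.mem hab hE) hd.1 1
  have hcm : c < m := by omega
  let c' : Fin m := ⟨c, hcm⟩
  have hc' : c'.val = c := rfl
  have hnot : s(z, c') ∉ t := by
    intro h
    exact g.nc z c' a b (by omega) hab h hE (by omega)
  have hG' : Good (insert s(z, c') (t.erase s(a, b))) := by
    refine insert_good (g.mono (Finset.erase_subset _ _)) (by omega) (by omega) ?_
    intro x y hxy hmem
    refine ⟨?_, by omega⟩
    rintro ⟨k1, k2, k3⟩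
    obtain ⟨hne, hxyt⟩ := Finset.mem_erase.1 hmem
    have n1 := g.nc x y a b hxy hab hxyt hE
    have n2 := g.nc a b x y hab hxy hE hxyt
    have hne' : ¬ (x.val = a.val ∧ y.val = b.val) := by
      rintro ⟨e1, e2⟩
      exact hne (by rw [Fin.ext e1, Fin.ext e2])
    have mx := hmax x y ⟨hxy, hxyt, by omega⟩
    by_cases hin : a.val ≤ x.val ∧ y.val ≤ b.val
    · exact hne' (c3.2.2 _ _ (EN.mem hxy hxyt) hin.1 hin.2 (by omega) (by omega))
    · omega
  have hA' : Adm q (insert s(z, c') (t.erase s(a, b))) := by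
    refine insert_adm (A.mono (Finset.erase_subset _ _)) (by omega) ?_
    rw [hz, hc']
    exact c4.symm
  have hne : s(z, c') ≠ s(a, b) := fun h => hnot (by rw [h]; exact hE)
  have hnot' : s(z, c') ∉ t.erase s(a, b) := fun h => hnot (Finset.mem_of_mem_erase h)
  refine ⟨_, hG', hA', ?_, ?_, ?_, ?_⟩
  · rw [Finset.card_insert_of_notMem hnot', Finset.card_erase_add_one hE]
  · have : t \ insert s(z, c') (t.erase s(a, b)) = {s(a, b)} := by
      ext e
      simp only [Finset.mem_sdiff, Finset.mem_insert, Finset.mem_erase, Finset.mem_singleton]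
      constructor
      · tauto
      · rintro rfl
        exact ⟨hE, by rintro (h | h); exacts [hne h.symm, h.1 rfl]⟩
    rw [this, Finset.card_singleton]
  · have : insert s(z, c') (t.erase s(a, b)) \ t = {s(z, c')} := by
      ext e
      simp only [Finset.mem_sdiff, Finset.mem_insert, Finset.mem_erase, Finset.mem_singleton]
      constructor
      · tauto
      · rintro rfl
        exact ⟨Or.inl rfl, hnot⟩
    rw [this, Finset.card_singleton]
  · apply Finset.card_lt_card
    rw [Finset.ssubset_iff_of_subset]
    · refine ⟨s(a, b), ?_, ?_⟩
      · rw [Finset.mem_filter, Sym2.mem_iff]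
        refine ⟨hE, ?_⟩
        rintro (h | h)
        · rw [← h] at ha0; omega
        · rw [← h] at hab; omega
      · simp only [Finset.mem_filter, Finset.mem_insert, Finset.mem_erase]
        rintro ⟨h | h, _⟩
        · exact hne h.symm
        · exact h.1 rfl
    · intro e
      simp only [Finset.mem_filter, Finset.mem_insert, Finset.mem_erase]
      rintro ⟨rfl | h, h2⟩
      · exact absurd (Sym2.mem_mk_left z c') h2
      · exact ⟨h.2, h2⟩

lemma fan_exists {m q n : ℕ} (hq : 1 ≤ q) (hn : 1 ≤ n) (hm : m = q * n + 2) (z : Fin m)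
    (hz : z.val = 0) :
    ∃ f : Finset (Sym2 (Fin m)), Good f ∧ Adm q f ∧ f.card = n - 1 ∧
      ∀ t : Finset (Sym2 (Fin m)), Good t → Adm q t → t.card = n - 1 →
        (∀ e ∈ t, z ∈ e) → t = f := by
  classical
  have hj : ∀ j : Fin (n - 1), q * (j.val + 1) + q + 2 ≤ m := by
    intro j
    have := j.isLt
    have := Nat.mul_le_mul_left q (by omega : j.val + 2 ≤ n)
    have e : q * (j.val + 2) = q * (j.val + 1) + q := by ring
    omega
  let v : Fin (n - 1) → Fin m := fun j => ⟨q * (j.val + 1) + 1, by have := hj j; omega⟩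
  have hv : ∀ j, (v j).val = q * (j.val + 1) + 1 := fun j => rfl
  have hpos : ∀ j : Fin (n - 1), 1 ≤ q * (j.val + 1) := fun j => Nat.mul_pos hq (by omega)
  let f : Finset (Sym2 (Fin m)) := Finset.univ.image (fun j => s(z, v j))
  have hf : ∀ e, e ∈ f ↔ ∃ j, s(z, v j) = e := by intro e; simp [f]
  have rep : ∀ a b : Fin m, a.val < b.val → s(a, b) ∈ f → a = z ∧ ∃ j, b = v j := by
    intro a b hab h
    obtain ⟨j, hj⟩ := (hf _).1 h
    rcases Sym2.eq_iff.1 hj with ⟨h1, h2⟩ | ⟨h1, h2⟩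
    · exact ⟨h1.symm, j, h2.symm⟩
    · rw [← h1] at hab; omega
  have hfc : f.card = n - 1 := by
    have hinj : Function.Injective (fun j => s(z, v j)) := by
      intro i j hij
      rcases Sym2.eq_iff.1 hij with ⟨_, h⟩ | ⟨h, h'⟩
      · have h := congrArg Fin.val h
        rw [hv, hv] at h
        have := Nat.eq_of_mul_eq_mul_left (by omega) (Nat.add_right_cancel h)
        exact Fin.ext (by omega)
      · have h := congrArg Fin.val h
        rw [hv] at h
        omega
    rw [Finset.card_image_of_injective _ hinj]
    simp
  refine ⟨f, ⟨?_, ?_, ?_⟩, ?_, hfc, ?_⟩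
  · intro x hx
    obtain ⟨j, h⟩ := (hf _).1 hx
    have h' := hv j
    rcases Sym2.eq_iff.1 h with ⟨h1, h2⟩ | ⟨h1, h2⟩ <;> rw [h2, ← h1] at h' <;> omega
  · intro a b hab h
    obtain ⟨rfl, j, rfl⟩ := rep a b hab h
    have := hv j
    have := hj j
    have := hpos j
    omega
  · intro a b c d hab hcd h h'
    obtain ⟨rfl, _⟩ := rep a b hab h
    obtain ⟨rfl, _⟩ := rep c d hcd h'
    omega
  · rintro x y ⟨hx, hy, hxy, (h | ⟨h1, h2⟩) | h⟩
    · rw [h]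
    · have : y = 1 + q * n := by omega
      rw [h1, this]
      simp [Nat.ModEq]
    · obtain ⟨h1, j, h2⟩ := rep _ _ hxy h
      have h1 := congrArg Fin.val h1
      have h2 := congrArg Fin.val h2
      rw [hv] at h2
      simp only at h1 h2
      rw [h1, h2, hz]
      simp [Nat.ModEq, Nat.add_mod]
  · intro t g A hc hall
    apply Finset.eq_of_subset_of_card_le _ (by omega)
    intro e he
    obtain ⟨a, b, hab, rfl⟩ := exists_rep g.nl he
    have hb := b.isLt
    have hza : a = z := by
      rcases Sym2.mem_iff.1 (hall _ he) with h | h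
      · exact h.symm
      · rw [← h] at hab; omega
    subst hza
    have hd := g.dg _ _ hab he
    have r := A _ _ (EN.mem hab he)
    obtain ⟨i, hi⟩ := (Nat.modEq_iff_dvd' (by omega)).1 r
    have hi1 : 1 ≤ i := by
      by_contra h
      have : i = 0 := by omega
      subst this
      simp at hi
      omega
    have hin : i < n := by
      by_contra h
      have := Nat.mul_le_mul_left q (Nat.le_of_not_lt h)
      omega
    refine (hf _).2 ⟨⟨i - 1, by omega⟩, ?_⟩
    congr 1
    have : v ⟨i - 1, by omega⟩ = b := by
      apply Fin.ext
      rw [hv]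
      simp only
      rw [Nat.sub_add_cancel hi1]
      omega
    rw [this]

lemma isKAng_iff {k n : ℕ} (hk : 3 ≤ k) (hn : 1 ≤ n)
    (t : Finset (Sym2 (Fin ((k - 2) * n + 2)))) :
    IsKAngulation k n t ↔ Good t ∧ Adm (k - 2) t ∧ t.card = n - 1 := by
  have hqn : 1 ≤ (k - 2) * n := Nat.mul_pos (by omega) hn
  have hm3 : 3 ≤ (k - 2) * n + 2 := by omega
  constructor
  · rintro ⟨h1, h2, h3, h4⟩
    have g := (good_iff hm3 t).1 ⟨h1, h2⟩
    exact ⟨g, adm_of_faces hm3 rfl g (fun F hF => by rw [h4 F hF]; omega), h3⟩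
  · rintro ⟨g, A, h3⟩
    obtain ⟨h1, h2⟩ := (good_iff hm3 t).2 g
    refine ⟨h1, h2, h3, fun F hF => ?_⟩
    rw [faces_of_adm (by omega) hn rfl g A h3 F hF]
    omega

end KA

/-- for every `k ≥ 3` and `n ≥ 1`, the `k`-angulation flip graph
`K_{k,(k-2)n+2}` on the `k`-angulations of the convex `((k-2)n+2)`-gon is connected. -/
theorem kAngGraph_connected (k n : ℕ) (hk : 3 ≤ k) (hn : 1 ≤ n) :
    (kAngGraph k n).Connected := by
  classical
  let z : Fin ((k - 2) * n + 2) := ⟨0, by omega⟩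
  obtain ⟨f, hf1, hf2, hf3, hf4⟩ :=
    KA.fan_exists (q := k - 2) (by omega) hn rfl z rfl
  let F : KAngulation k n := ⟨f, (KA.isKAng_iff hk hn f).2 ⟨hf1, hf2, hf3⟩⟩
  have key : ∀ N, ∀ t : KAngulation k n, (t.val.filter (fun e => z ∉ e)).card = N →
      (kAngGraph k n).Reachable t F := by
    intro N
    induction N using Nat.strong_induction_on with
    | _ N ih =>
      intro t ht
      obtain ⟨g, A, hc⟩ := (KA.isKAng_iff hk hn t.val).1 t.property
      by_cases hex : ∃ e ∈ t.val, z ∉ e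
      · obtain ⟨t', g', A', hc', d1, d2, hlt⟩ :=
          KA.flip_step (q := k - 2) (by omega) hn rfl z rfl g A hex
        let T' : KAngulation k n := ⟨t', (KA.isKAng_iff hk hn t').2 ⟨g', A', by omega⟩⟩
        have hadj : (kAngGraph k n).Adj t T' := ⟨d1, d2⟩
        exact hadj.reachable.trans (ih _ (ht ▸ hlt) T' rfl)
      · push Not at hex
        have : t = F := Subtype.ext (hf4 t.val g A hc hex)
        rw [this]
  rw [SimpleGraph.connected_iff]
  exact ⟨fun s t => (key _ s rfl).trans (key _ t rfl).symm, ⟨F⟩⟩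
end
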